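/- Let H ∈ C_{1,0}, i.e. a bounded self-adjoint operator with kernel satisfying ‖H‖_{1,0} < ∞, and suppose additionally that ‖H - H_M‖_{1,0} → 0 as M → ∞, where H_M has kernel χ(|x-x'|/M)H(x,x') and χ is the indicator of [0,1]. Let φ be an antisymmetric phase satisfying the triangle estimate |φ(x,y)+φ(y,x')-φ(x,x')| ≤ |x-y||y-x'|, and let H_b have kernel e^{ibφ(x,x')}H(x,x'). Then the map b ↦ d_H(σ(H_b), σ(H)) is continuous at b = 0. -/

import Mathlib

open MeasureTheory Filter ENNReal

noncomputable section

abbrev Ed (d : ℕ) := EuclideanSpace ℝ (Fin d)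
abbrev L2 (d : ℕ) := Lp ℂ 2 (volume : Measure (Ed d))

/-- Japanese bracket ⟨y⟩ = √(1+|y|²). -/
def jbr {d : ℕ} (y : Ed d) : ℝ := Real.sqrt (1 + ‖y‖ ^ 2)

/-- Weighted Schur–Holmgren norm ‖K‖_{1,α}. -/
def SHnorm {d : ℕ} (α : ℝ) (K : Ed d → Ed d → ℂ) : ℝ≥0∞ :=
  max (⨆ x' : Ed d, ∫⁻ x, ENNReal.ofReal (‖K x x'‖ * jbr (x - x') ^ α))
      (⨆ x : Ed d, ∫⁻ x', ENNReal.ofReal (‖K x x'‖ * jbr (x - x') ^ α))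

/-!
Multiplication by a tent function of radius `R` centred at `y`, twisted by the phase
`e^{ibφ(x,y)}`, almost intertwines `H` with `H_b`: for `‖x - x'‖ ≤ M` the triangle estimate bounds
the phase mismatch by `|b| M R`, and the cutoff varies by at most `M / R`. Hence the lower bound
`dist(z, σ(H_b)) ‖η‖ ≤ ‖(H_b - z) η‖`, applied to the localizations `η` of `ψ` and averaged over `y`
by a Schur test, bounds `‖(H - z) ψ‖` from below up to the error `|b| M R + M / R` and the norm of
`H - H_M`. With `R = |b|^{-1/2}` this gives `d_H(σ(H_b), σ(H))² ≲ |b| M² + ‖H - H_M‖`, first for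
the distance from `σ(H)` to `σ(H_b)` and then, exchanging the roles of `H` and `H_b`, both ways.

The kernel is only given pointwise. Lebesgue differentiation yields a jointly measurable
representative, whose columns inherit the bounds on the rows because `H` is self-adjoint.
-/

section Spectrum
variable {F : Type*} [NormedAddCommGroup F] [InnerProductSpace ℂ F] [CompleteSpace F]
  {T : F →L[ℂ] F} {z : ℂ}

theorem infDist_spectrum_mul_norm_le (hT : IsStarNormal T) (z : ℂ) (v : F) :
    Metric.infDist z (spectrum ℂ T) * ‖v‖ ≤ ‖T v - z • v‖ := by
  rcases (Metric.infDist_nonneg (x := z) (s := spectrum ℂ T)).eq_or_lt with h0 | hδ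
  · rw [← h0, zero_mul]
    exact norm_nonneg _
  set δ := Metric.infDist z (spectrum ℂ T)
  have hle : ∀ w ∈ spectrum ℂ T, δ ≤ ‖w - z‖ := fun w hw => by
    rw [← dist_eq_norm, dist_comm]
    exact Metric.infDist_le_dist_of_mem hw
  have hne : ∀ w ∈ spectrum ℂ T, w - z ≠ 0 := fun w hw =>
    norm_pos_iff.1 (hδ.trans_le (hle w hw))
  have hcont : ContinuousOn (fun w : ℂ => (w - z)⁻¹) (spectrum ℂ T) :=
    ContinuousOn.inv₀ (by fun_prop) hne
  set B := cfc (fun w : ℂ => (w - z)⁻¹) T with hB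
  have hBnorm : ‖B‖ ≤ δ⁻¹ := norm_cfc_le (by positivity) fun w hw => by
    rw [norm_inv]
    exact inv_anti₀ hδ (hle w hw)
  have hsub : cfc (fun w : ℂ => w - z) T = T - algebraMap ℂ (F →L[ℂ] F) z := by
    rw [cfc_sub (fun w : ℂ => w) (fun _ => z), cfc_id' ℂ T, cfc_const z T]
  have hinv : B * (T - algebraMap ℂ (F →L[ℂ] F) z) = 1 := by
    rw [← hsub, hB, ← cfc_mul _ _ T hcont (by fun_prop), ← cfc_one ℂ T]
    exact cfc_congr fun w hw => by simpa using inv_mul_cancel₀ (hne w hw)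
  have hv : B (T v - z • v) = v := by
    simpa [Algebra.algebraMap_eq_smul_one] using DFunLike.congr_fun hinv v
  calc δ * ‖v‖ = δ * ‖B (T v - z • v)‖ := by rw [hv]
    _ ≤ δ * (δ⁻¹ * ‖T v - z • v‖) := by
        gcongr
        exact B.le_of_opNorm_le hBnorm _
    _ = ‖T v - z • v‖ := by field_simp

theorem isUnit_of_isStarNormal_of_antilipschitz (hT : IsStarNormal T) {K : NNReal}
    (h : AntilipschitzWith K T) : IsUnit T := by
  rw [ContinuousLinearMap.isUnit_iff_bijective,
    ContinuousLinearMap.bijective_iff_dense_range_and_antilipschitz]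
  refine ⟨?_, K, h⟩
  rw [Submodule.topologicalClosure_eq_top_iff,
    ContinuousLinearMap.IsStarNormal.orthogonal_range hT]
  exact LinearMap.ker_eq_bot.2 h.injective

theorem nonpos_of_mem_spectrum (hT : IsStarNormal T) (hz : z ∈ spectrum ℂ T) {c : ℝ}
    (h : ∀ v, c * ‖v‖ ^ 2 ≤ ‖T v - z • v‖ ^ 2) : c ≤ 0 := by
  by_contra! hc
  set A := algebraMap ℂ (F →L[ℂ] F) z - T with hA
  have hz_normal : IsStarNormal (algebraMap ℂ (F →L[ℂ] F) z) := ⟨(Algebra.commutes z _).symm⟩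
  have hA_normal : IsStarNormal A :=
    Commute.isStarNormal_sub (Algebra.commutes z (star T))
  have hAv : ∀ v, ‖A v‖ = ‖T v - z • v‖ := fun v => by
    rw [norm_sub_rev]
    simp [hA, Algebra.algebraMap_eq_smul_one]
  have hbelow : ∀ v, ‖v‖ ≤ (√c).toNNReal⁻¹ * ‖A v‖ := fun v => by
    have hsqrt : 0 < √c := Real.sqrt_pos.2 hc
    rw [NNReal.coe_inv, Real.coe_toNNReal _ hsqrt.le, inv_mul_eq_div, le_div_iff₀ hsqrt, hAv,
      ← abs_of_nonneg (norm_nonneg v), mul_comm]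
    refine abs_le_of_sq_le_sq' ?_ (norm_nonneg _) |>.2
    simpa [mul_pow, Real.sq_sqrt hc.le] using h v
  exact hz (isUnit_of_isStarNormal_of_antilipschitz hA_normal (A.antilipschitz_of_bound hbelow))

end Spectrum

section MeasurableSections
variable {X Y E : Type*} [MeasurableSpace Y] (ν : Measure Y)

open Classical in
/-- The kernel `K` with those sections `K x` that are not a.e. strongly measurable replaced by `0`;
it represents the same integral operator as `K`. -/
def measurableSections [TopologicalSpace E] [Zero E] (K : X → Y → E) (x : X) : Y → E :=
  if AEStronglyMeasurable (K x) ν then K x else 0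

theorem aestronglyMeasurable_measurableSections [TopologicalSpace E] [Zero E] (K : X → Y → E)
    (x : X) : AEStronglyMeasurable (measurableSections ν K x) ν := by
  unfold measurableSections
  split_ifs with h
  exacts [h, aestronglyMeasurable_zero]

theorem enorm_measurableSections_le [NormedAddCommGroup E] (K : X → Y → E) (x : X) (y : Y) :
    ‖measurableSections ν K x y‖ₑ ≤ ‖K x y‖ₑ := by
  unfold measurableSections
  split_ifs <;> simp

end MeasurableSections

section IntegralKernel
variable {X 𝕜 : Type*} [MeasurableSpace X] {μ : Measure X} [RCLike 𝕜]

/-- `T` is the integral operator on `L²(μ)` with kernel `K`. Since `∫` is the Bochner integral,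
`T ψ` has to vanish wherever `K x * ψ` is not integrable. -/
def HasIntegralKernel (T : Lp 𝕜 2 μ →L[𝕜] Lp 𝕜 2 μ) (K : X → X → 𝕜) : Prop :=
  ∀ ψ : Lp 𝕜 2 μ, ∀ᵐ x ∂μ, T ψ x = ∫ x', K x x' * ψ x' ∂μ

namespace HasIntegralKernel
variable {T T₁ T₂ : Lp 𝕜 2 μ →L[𝕜] Lp 𝕜 2 μ} {K K' : X → X → 𝕜}

theorem unique (h₁ : HasIntegralKernel T₁ K) (h₂ : HasIntegralKernel T₂ K) : T₁ = T₂ :=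
  ContinuousLinearMap.ext fun ψ => Lp.ext <| by
    filter_upwards [h₁ ψ, h₂ ψ] with x hx₁ hx₂
    rw [hx₁, hx₂]

theorem congr_ae (hT : HasIntegralKernel T K) (hK : ∀ᵐ x ∂μ, K' x =ᵐ[μ] K x) :
    HasIntegralKernel T K' := fun ψ => by
  filter_upwards [hT ψ, hK] with x hx hKx
  rw [hx]
  exact integral_congr_ae (hKx.mono fun x' hx' => by simp only [hx'])

end HasIntegralKernel

theorem aestronglyMeasurable_of_mul_right {f g : X → 𝕜} (hg : AEStronglyMeasurable g μ)
    (hg0 : ∀ᵐ x ∂μ, g x ≠ 0) (h : AEStronglyMeasurable (fun x => f x * g x) μ) :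
    AEStronglyMeasurable f μ :=
  (h.mul hg.aemeasurable.inv.aestronglyMeasurable).congr (hg0.mono fun x hx => by simp [hx])

theorem exists_Lp_ae_ne_zero [SigmaFinite μ] {p : ℝ≥0∞} (hp0 : p ≠ 0) (hp : p ≠ ⊤) :
    ∃ ψ : Lp 𝕜 p μ, ∀ᵐ x ∂μ, ψ x ≠ 0 := by
  obtain ⟨g, hpos, hg, hint⟩ := exists_pos_lintegral_lt_of_sigmaFinite μ one_ne_zero
  have hL : MemLp (fun x => ((g x ^ p.toReal⁻¹ : ℝ) : 𝕜)) p μ := by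
    refine ⟨(RCLike.measurable_ofReal.comp
      (hg.coe_nnreal_real.pow_const p.toReal⁻¹)).aestronglyMeasurable, ?_⟩
    rw [eLpNorm_lt_top_iff_lintegral_rpow_enorm_lt_top hp0 hp]
    refine lt_of_le_of_lt (lintegral_mono fun x => ?_) (hint.trans one_lt_top)
    rw [← ofReal_norm, RCLike.norm_ofReal, abs_of_nonneg (by positivity),
      ofReal_rpow_of_nonneg (by positivity) (by positivity), ← Real.rpow_mul (g x).coe_nonneg,
      inv_mul_cancel₀ (toReal_pos hp0 hp).ne', Real.rpow_one, ofReal_coe_nnreal]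
  refine ⟨hL.toLp _, hL.coeFn_toLp.mono fun x hx => ?_⟩
  rw [hx]
  exact RCLike.ofReal_ne_zero.2 (Real.rpow_pos_of_pos (hpos x) _).ne'

theorem exists_ae_add_mul_ne_zero [SFinite μ] {f g : X → 𝕜} (hf : AEMeasurable f μ)
    (hg : AEMeasurable g μ) (hg0 : ∀ᵐ x ∂μ, g x ≠ 0) : ∃ c : 𝕜, ∀ᵐ x ∂μ, f x + c * g x ≠ 0 := by
  have hcount : {t : 𝕜 | 0 < μ {x | -f x / g x = t}}.Countable :=
    Measure.countable_meas_level_set_pos₀ (hf.neg.div hg).nullMeasurable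
  obtain ⟨c, hc⟩ : ∃ c : ℝ, (c : 𝕜) ∉ {t : 𝕜 | 0 < μ {x | -f x / g x = t}} := by
    by_contra! hall
    refine Cardinal.not_countable_real ((hcount.preimage RCLike.ofReal_injective).mono ?_)
    exact fun c _ => hall c
  have hc' : ∀ᵐ x ∂μ, -f x / g x ≠ c := by simpa [ae_iff] using hc
  refine ⟨c, ?_⟩
  filter_upwards [hc', hg0] with x hx hgx hzero
  refine hx ((div_eq_iff hgx).2 ?_)
  linear_combination -hzero

namespace HasIntegralKernel
variable {T : Lp 𝕜 2 μ →L[𝕜] Lp 𝕜 2 μ} {K : X → X → 𝕜}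

-- If `η` vanishes nowhere, then `K x * η` inherits the non-measurability of `K x`, so its Bochner
-- integral is `0`; every `ψ` is a difference of two such functions.
theorem apply_eq_zero_of_not_aestronglyMeasurable [SigmaFinite μ] (hT : HasIntegralKernel T K)
    (ψ : Lp 𝕜 2 μ) : ∀ᵐ x ∂μ, ¬ AEStronglyMeasurable (K x) μ → T ψ x = 0 := by
  have hzero : ∀ η : Lp 𝕜 2 μ, (∀ᵐ x ∂μ, η x ≠ 0) →
      ∀ᵐ x ∂μ, ¬ AEStronglyMeasurable (K x) μ → T η x = 0 := fun η hη =>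
    (hT η).mono fun x hx hKx => hx.trans <| integral_undef fun hi => hKx <|
      aestronglyMeasurable_of_mul_right (Lp.aestronglyMeasurable η) hη hi.aestronglyMeasurable
  obtain ⟨ψ₀, hψ₀⟩ := exists_Lp_ae_ne_zero (𝕜 := 𝕜) (μ := μ) two_ne_zero ofNat_ne_top
  obtain ⟨c, hc⟩ := exists_ae_add_mul_ne_zero (Lp.aestronglyMeasurable ψ).aemeasurable
    (Lp.aestronglyMeasurable ψ₀).aemeasurable hψ₀
  have hsum : ∀ᵐ x ∂μ, (ψ + c • ψ₀ : Lp 𝕜 2 μ) x ≠ 0 := by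
    filter_upwards [hc, Lp.coeFn_add ψ (c • ψ₀), Lp.coeFn_smul c ψ₀] with x hx hadd hsmul
    rwa [hadd, Pi.add_apply, hsmul]
  have hT_sub : T ψ = T (ψ + c • ψ₀) - c • T ψ₀ := by simp
  rw [hT_sub]
  filter_upwards [hzero _ hsum, hzero _ hψ₀, Lp.coeFn_sub (T (ψ + c • ψ₀)) (c • T ψ₀),
    Lp.coeFn_smul c (T ψ₀)] with x h h₀ hsub hsmul hKx
  rw [hsub, Pi.sub_apply, hsmul, Pi.smul_apply, h hKx, h₀ hKx, smul_zero, sub_zero]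

protected theorem measurableSections [SigmaFinite μ] (hT : HasIntegralKernel T K) :
    HasIntegralKernel T (measurableSections μ K) := fun ψ => by
  filter_upwards [hT ψ, hT.apply_eq_zero_of_not_aestronglyMeasurable ψ] with x hx hzero
  by_cases h : AEStronglyMeasurable (K x) μ
  · simp only [measurableSections, if_pos h, hx]
  · simp [measurableSections, if_neg h, hzero h]

end HasIntegralKernel

end IntegralKernel

section JointMeasurability

theorem exists_measurable_dist_lt_of_denseRange {X : Type*} [PseudoMetricSpace X]
    [MeasurableSpace X] [OpensMeasurableSpace X] {q : ℕ → X} (hq : DenseRange q) {δ : ℝ}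
    (hδ : 0 < δ) : ∃ j : X → ℕ, Measurable j ∧ ∀ x, dist x (q (j x)) < δ := by
  classical
  have hex : ∀ x, ∃ k, dist x (q k) < δ := fun x => hq.exists_dist_lt x hδ
  exact ⟨fun x => Nat.find (hex x), measurable_find hex fun k => Metric.isOpen_ball.measurableSet,
    fun x => Nat.find_spec (hex x)⟩

-- By Lebesgue differentiation `K a x` is the limit of the averages of `K a` over balls of radius
-- `2⁻ⁿ` around a point of a dense sequence selected measurably near `x`, and these averages are
-- jointly measurable in `a` and `x`.
theorem exists_measurable_uncurry_ae_eq {α X F : Type*} [MeasurableSpace α] {ν : Measure α}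
    [PseudoMetricSpace X] [SecondCountableTopology X] [Nonempty X] [MeasurableSpace X]
    [BorelSpace X] {μ : Measure X} [IsUnifLocDoublingMeasure μ] [IsLocallyFiniteMeasure μ]
    [NormedAddCommGroup F] [NormedSpace ℝ F] [CompleteSpace F] [SecondCountableTopology F]
    [MeasurableSpace F] [BorelSpace F] {K : α → X → F} (hK : ∀ᵐ a ∂ν, LocallyIntegrable (K a) μ)
    (hmeas : ∀ c r, AEMeasurable (fun a => ∫ x in Metric.closedBall c r, K a x ∂μ) ν) :
    ∃ K' : α → X → F, Measurable (Function.uncurry K') ∧ ∀ᵐ a ∂ν, K' a =ᵐ[μ] K a := by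
  have hpos : ∀ n : ℕ, (0 : ℝ) < (1 / 2) ^ n := fun n => by positivity
  have hlim : Tendsto (fun n : ℕ => (1 / 2 : ℝ) ^ n) atTop (nhdsWithin 0 (Set.Ioi 0)) :=
    tendsto_nhdsWithin_iff.2 ⟨tendsto_pow_atTop_nhds_zero_of_lt_one (by norm_num) (by norm_num),
      Eventually.of_forall hpos⟩
  obtain ⟨q, hq⟩ := TopologicalSpace.exists_dense_seq X
  choose j hj hjdist using fun n => exists_measurable_dist_lt_of_denseRange hq (hpos n)
  let ball (n k : ℕ) : Set X := Metric.closedBall (q k) ((1 / 2) ^ n)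
  let ballInt (n k : ℕ) (a : α) : F := (hmeas (q k) ((1 / 2) ^ n)).mk _ a
  let avg (n : ℕ) (a : α) (x : X) : F := (μ.real (ball n (j n x)))⁻¹ • ballInt n (j n x) a
  have hballInt_meas : ∀ n k, Measurable (ballInt n k) := fun n k =>
    (hmeas (q k) ((1 / 2) ^ n)).measurable_mk
  have havg : ∀ n, Measurable (Function.uncurry (avg n)) := fun n => by
    have hpair : Measurable fun p : α × ℕ => (μ.real (ball n p.2))⁻¹ • ballInt n p.2 p.1 :=
      measurable_from_prod_countable_left fun k =>
        (hballInt_meas n k).const_smul (μ.real (ball n k))⁻¹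
    exact hpair.comp (measurable_fst.prodMk ((hj n).comp measurable_snd))
  refine ⟨fun a x => limUnder atTop fun n => avg n a x, ?_, ?_⟩
  · exact (StronglyMeasurable.limUnder (l := atTop)
      (f := fun n p => Function.uncurry (avg n) p) fun n => (havg n).stronglyMeasurable).measurable
  have hballInt : ∀ᵐ a ∂ν, ∀ n k, ballInt n k a = ∫ x in ball n k, K a x ∂μ := by
    simp only [ae_all_iff]
    exact fun n k => (hmeas (q k) _).ae_eq_mk.symm
  filter_upwards [hK, hballInt] with a hKa ha
  filter_upwards [IsUnifLocDoublingMeasure.ae_tendsto_average μ hKa 1] with x hx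
  refine Tendsto.limUnder_eq ((hx (fun n => q (j n x)) _ hlim
    (Eventually.of_forall fun n => ?_)).congr fun n => ?_)
  · rw [one_mul, Metric.mem_closedBall]
    exact (hjdist n x).le
  · simp only [avg, ball, ha, setAverage_eq]

namespace HasIntegralKernel
variable {X 𝕜 : Type*} [RCLike 𝕜]

theorem apply_indicatorConstLp_one [MeasurableSpace X] {μ : Measure X}
    {T : Lp 𝕜 2 μ →L[𝕜] Lp 𝕜 2 μ} {K : X → X → 𝕜} (hT : HasIntegralKernel T K) {s : Set X}
    (hs : MeasurableSet s) (hμs : μ s ≠ ⊤) :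
    ∀ᵐ x ∂μ, T (indicatorConstLp 2 hs hμs (1 : 𝕜)) x = ∫ x' in s, K x x' ∂μ := by
  filter_upwards [hT (indicatorConstLp 2 hs hμs (1 : 𝕜))] with x hx
  rw [hx, ← integral_indicator hs]
  have hcoe := indicatorConstLp_coeFn (p := 2) (hs := hs) (hμs := hμs) (c := (1 : 𝕜))
  refine integral_congr_ae (hcoe.mono fun x' hx' => ?_)
  by_cases hmem : x' ∈ s <;> simp [hx', hmem]

theorem exists_measurable [PseudoMetricSpace X] [ProperSpace X] [Nonempty X] [MeasurableSpace X]
    [BorelSpace X] {μ : Measure X} [IsUnifLocDoublingMeasure μ] [IsLocallyFiniteMeasure μ]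
    {T : Lp 𝕜 2 μ →L[𝕜] Lp 𝕜 2 μ} {K : X → X → 𝕜} (hT : HasIntegralKernel T K)
    (hK : ∀ᵐ x ∂μ, LocallyIntegrable (K x) μ) :
    ∃ K' : X → X → 𝕜, Measurable (Function.uncurry K') ∧ ∀ᵐ x ∂μ, K' x =ᵐ[μ] K x := by
  refine exists_measurable_uncurry_ae_eq hK fun c r => AEMeasurable.congr ?_
    (hT.apply_indicatorConstLp_one (Metric.isClosed_closedBall (x := c) (ε := r)).measurableSet
      measure_closedBall_lt_top.ne)
  exact (Lp.aestronglyMeasurable _).aemeasurable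

end HasIntegralKernel

end JointMeasurability

section AdjointKernel

theorem ae_eq_of_forall_setIntegral_prod_eq {α β F : Type*} [MeasurableSpace α]
    [MeasurableSpace β] [NormedAddCommGroup F] [NormedSpace ℝ F] [CompleteSpace F]
    {μ : Measure α} {ν : Measure β} {f g : α × β → F} (hf : Integrable f (μ.prod ν))
    (hg : Integrable g (μ.prod ν))
    (h : ∀ s t, MeasurableSet s → MeasurableSet t →
      ∫ p in s ×ˢ t, f p ∂μ.prod ν = ∫ p in s ×ˢ t, g p ∂μ.prod ν) :
    f =ᵐ[μ.prod ν] g := by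
  suffices hall : ∀ u, MeasurableSet u → ∫ p in u, f p ∂μ.prod ν = ∫ p in u, g p ∂μ.prod ν from
    hf.ae_eq_of_forall_setIntegral_eq _ _ hg fun u hu _ => hall u hu
  intro u hu
  induction u, hu using MeasurableSpace.induction_on_inter generateFrom_prod.symm
    isPiSystem_prod with
  | empty => simp
  | basic u hu =>
    obtain ⟨s, hs, t, ht, rfl⟩ := hu
    exact h s t hs ht
  | compl u hu ih =>
    have huniv := h Set.univ Set.univ .univ .univ
    rw [Set.univ_prod_univ, setIntegral_univ, setIntegral_univ] at huniv
    rw [setIntegral_compl hu hf, setIntegral_compl hu hg, huniv, ih]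
  | iUnion u hdisj hu ih =>
    rw [integral_iUnion hu hdisj hf.integrableOn, integral_iUnion hu hdisj hg.integrableOn]
    exact tsum_congr ih

theorem ae_eq_of_forall_setIntegral_prod_eq_of_sigmaFinite {α β F : Type*} [MeasurableSpace α]
    [MeasurableSpace β] [NormedAddCommGroup F] [NormedSpace ℝ F] [CompleteSpace F]
    {μ : Measure α} {ν : Measure β} [SigmaFinite μ] [SigmaFinite ν] {f g : α × β → F}
    (hf : ∀ s t, μ s ≠ ⊤ → ν t ≠ ⊤ → IntegrableOn f (s ×ˢ t) (μ.prod ν))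
    (hg : ∀ s t, μ s ≠ ⊤ → ν t ≠ ⊤ → IntegrableOn g (s ×ˢ t) (μ.prod ν))
    (h : ∀ s t, MeasurableSet s → MeasurableSet t → μ s ≠ ⊤ → ν t ≠ ⊤ →
      ∫ p in s ×ˢ t, f p ∂μ.prod ν = ∫ p in s ×ˢ t, g p ∂μ.prod ν) :
    f =ᵐ[μ.prod ν] g := by
  have hloc : ∀ n, f =ᵐ[(μ.prod ν).restrict (spanningSets μ n ×ˢ spanningSets ν n)] g := by
    intro n
    have hμ := (measure_spanningSets_lt_top μ n).ne
    have hν := (measure_spanningSets_lt_top ν n).ne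
    rw [← Measure.prod_restrict]
    refine ae_eq_of_forall_setIntegral_prod_eq ?_ ?_ fun s t hs ht => ?_
    · exact Measure.prod_restrict (μ := μ) (ν := ν) _ _ ▸ hf _ _ hμ hν
    · exact Measure.prod_restrict (μ := μ) (ν := ν) _ _ ▸ hg _ _ hμ hν
    · simp only [Measure.prod_restrict, Measure.restrict_restrict (hs.prod ht), Set.prod_inter_prod]
      exact h _ _ (hs.inter (measurableSet_spanningSets μ n))
        (ht.inter (measurableSet_spanningSets ν n))
        (measure_ne_top_of_subset Set.inter_subset_right hμ)
        (measure_ne_top_of_subset Set.inter_subset_right hν)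
  have hcover : ⋃ n, spanningSets μ n ×ˢ spanningSets ν n = Set.univ := by
    rw [Set.iUnion_prod_of_monotone (monotone_spanningSets μ) (monotone_spanningSets ν),
      iUnion_spanningSets, iUnion_spanningSets, Set.univ_prod_univ]
  rw [← Measure.restrict_univ (μ := μ.prod ν), ← hcover]
  exact (ae_restrict_iUnion_iff _ _).2 hloc

theorem integrableOn_prod_of_ae_lintegral_enorm_le {α β F : Type*} [MeasurableSpace α]
    [MeasurableSpace β] [NormedAddCommGroup F] {μ : Measure α} {ν : Measure β} [SFinite μ]
    [SFinite ν] {f : α × β → F} (hf : AEStronglyMeasurable f (μ.prod ν)) {C : NNReal}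
    (hC : ∀ᵐ a ∂μ, ∫⁻ b, ‖f (a, b)‖ₑ ∂ν ≤ C) {s : Set α} (hs : μ s ≠ ⊤) (t : Set β) :
    IntegrableOn f (s ×ˢ t) (μ.prod ν) := by
  have hf_restrict : AEStronglyMeasurable f ((μ.restrict s).prod (ν.restrict t)) :=
    Measure.prod_restrict (μ := μ) (ν := ν) s t ▸ hf.restrict
  rw [IntegrableOn, ← Measure.prod_restrict]
  refine ⟨hf_restrict, ?_⟩
  rw [hasFiniteIntegral_iff_enorm, lintegral_prod _ hf_restrict.enorm]
  calc ∫⁻ a in s, ∫⁻ b in t, ‖f (a, b)‖ₑ ∂ν ∂μ ≤ ∫⁻ _ in s, C ∂μ :=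
        lintegral_mono_ae <| ae_restrict_of_ae <| hC.mono fun a ha =>
          (setLIntegral_le_lintegral _ _).trans ha
    _ < ⊤ := by
        rw [setLIntegral_const]
        exact mul_lt_top coe_lt_top hs.lt_top

theorem ae_lintegral_swap_le {X : Type*} [MeasurableSpace X] {μ : Measure X} [SFinite μ]
    {k : X → X → ℝ≥0∞} {C : ℝ≥0∞} (hk : ∀ᵐ p ∂μ.prod μ, k p.2 p.1 = k p.1 p.2)
    (hC : ∀ᵐ x ∂μ, ∫⁻ x', k x x' ∂μ ≤ C) : ∀ᵐ x' ∂μ, ∫⁻ x, k x x' ∂μ ≤ C := by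
  filter_upwards [Measure.ae_ae_of_ae_prod hk, hC] with x hx hCx
  rwa [lintegral_congr_ae hx]

namespace HasIntegralKernel
variable {X 𝕜 : Type*} [MeasurableSpace X] {μ : Measure X} [RCLike 𝕜]
  {T : Lp 𝕜 2 μ →L[𝕜] Lp 𝕜 2 μ} {K L : X → X → 𝕜}

theorem inner_indicatorConstLp_one (hT : HasIntegralKernel T K) {s t : Set X}
    (hs : MeasurableSet s) (ht : MeasurableSet t) (hμs : μ s ≠ ⊤) (hμt : μ t ≠ ⊤) :
    inner 𝕜 (indicatorConstLp 2 hs hμs (1 : 𝕜)) (T (indicatorConstLp 2 ht hμt (1 : 𝕜))) =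
      ∫ x in s, ∫ x' in t, K x x' ∂μ ∂μ := by
  rw [L2.inner_indicatorConstLp_one]
  exact integral_congr_ae (ae_restrict_of_ae (hT.apply_indicatorConstLp_one ht hμt))

theorem adjoint_kernel_ae_eq [SigmaFinite μ] (hT : HasIntegralKernel T K)
    (hT_adj : HasIntegralKernel (ContinuousLinearMap.adjoint T) L)
    (hK : ∀ s t, μ s ≠ ⊤ → μ t ≠ ⊤ → IntegrableOn (Function.uncurry K) (s ×ˢ t) (μ.prod μ))
    (hL : ∀ s t, μ s ≠ ⊤ → μ t ≠ ⊤ → IntegrableOn (Function.uncurry L) (s ×ˢ t) (μ.prod μ)) :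
    ∀ᵐ p ∂μ.prod μ, L p.2 p.1 = starRingEnd 𝕜 (K p.1 p.2) := by
  refine ae_eq_of_forall_setIntegral_prod_eq_of_sigmaFinite
    (fun s t hs ht => (hL t s ht hs).swap) (fun s t hs ht => ?_) fun s t hs ht hμs hμt => ?_
  · exact (LinearIsometryEquiv.integrable_comp_iff RCLike.conjLIE).2 (hK s t hs ht)
  calc ∫ p in s ×ˢ t, L p.2 p.1 ∂μ.prod μ
      = ∫ p in t ×ˢ s, Function.uncurry L p ∂μ.prod μ :=
        setIntegral_prod_swap t s (Function.uncurry L)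
    _ = inner 𝕜 (indicatorConstLp 2 ht hμt 1)
          (ContinuousLinearMap.adjoint T (indicatorConstLp 2 hs hμs 1)) := by
        rw [setIntegral_prod _ (hL t s hμt hμs),
          hT_adj.inner_indicatorConstLp_one ht hs hμt hμs]
        rfl
    _ = starRingEnd 𝕜 (inner 𝕜 (indicatorConstLp 2 hs hμs 1)
          (T (indicatorConstLp 2 ht hμt 1))) := by
        rw [ContinuousLinearMap.adjoint_inner_right, inner_conj_symm]
    _ = starRingEnd 𝕜 (∫ p in s ×ˢ t, Function.uncurry K p ∂μ.prod μ) := by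
        rw [setIntegral_prod _ (hK s t hμs hμt), hT.inner_indicatorConstLp_one hs ht hμs hμt]
        rfl
    _ = ∫ p in s ×ˢ t, starRingEnd 𝕜 (K p.1 p.2) ∂μ.prod μ := integral_conj.symm

end HasIntegralKernel

end AdjointKernel

section SchurTest

theorem sq_lintegral_mul_le {α : Type*} [MeasurableSpace α] {μ : Measure α} {k f : α → ℝ≥0∞}
    (hk : AEMeasurable k μ) (hf : AEMeasurable f μ) :
    (∫⁻ x, k x * f x ∂μ) ^ 2 ≤ (∫⁻ x, k x ∂μ) * ∫⁻ x, k x * f x ^ 2 ∂μ := by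
  have hsq : ∀ t : ℝ≥0∞, (t ^ (1 / 2 : ℝ)) ^ 2 = t := fun t => by
    rw [← rpow_natCast, ← rpow_mul]
    norm_num
  have hmul : ∀ t : ℝ≥0∞, t ^ (1 / 2 : ℝ) * t ^ (1 / 2 : ℝ) = t := fun t => by rw [← sq, hsq]
  have h := lintegral_mul_le_Lp_mul_Lq μ Real.HolderConjugate.two_two
    (hk.pow_const (1 / 2 : ℝ)) ((hk.pow_const (1 / 2 : ℝ)).mul hf)
  simp only [Pi.mul_apply, ← mul_assoc, hmul, rpow_ofNat, mul_pow, hsq] at h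
  calc (∫⁻ x, k x * f x ∂μ) ^ 2
      ≤ ((∫⁻ x, k x ∂μ) ^ (1 / 2 : ℝ) * (∫⁻ x, k x * f x ^ 2 ∂μ) ^ (1 / 2 : ℝ)) ^ 2 := by gcongr
    _ = (∫⁻ x, k x ∂μ) * ∫⁻ x, k x * f x ^ 2 ∂μ := by rw [mul_pow, hsq, hsq]

theorem lintegral_sq_lintegral_mul_le {α β : Type*} [MeasurableSpace α] [MeasurableSpace β]
    {μ : Measure α} {ν : Measure β} [SFinite μ] [SFinite ν] {k w : α → β → ℝ≥0∞}
    {f : β → ℝ≥0∞} {C S : ℝ≥0∞} (hk : Measurable (Function.uncurry k))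
    (hw : Measurable (Function.uncurry w)) (hf : Measurable f)
    (hrow : ∀ᵐ a ∂μ, ∫⁻ b, k a b ∂ν ≤ C) (hcol : ∀ᵐ b ∂ν, ∫⁻ a, k a b * w a b ^ 2 ∂μ ≤ S) :
    ∫⁻ a, (∫⁻ b, k a b * (w a b * f b) ∂ν) ^ 2 ∂μ ≤ C * S * ∫⁻ b, f b ^ 2 ∂ν := by
  have hkw : Measurable fun p : α × β => k p.1 p.2 * w p.1 p.2 ^ 2 := hk.mul (hw.pow_const 2)
  have hkwf : Measurable fun p : α × β => k p.1 p.2 * (w p.1 p.2 * f p.2) ^ 2 :=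
    hk.mul ((hw.mul (hf.comp measurable_snd)).pow_const 2)
  calc ∫⁻ a, (∫⁻ b, k a b * (w a b * f b) ∂ν) ^ 2 ∂μ
      ≤ ∫⁻ a, C * ∫⁻ b, k a b * (w a b * f b) ^ 2 ∂ν ∂μ := by
        refine lintegral_mono_ae (hrow.mono fun a ha => ?_)
        refine (sq_lintegral_mul_le (hk.comp measurable_prodMk_left).aemeasurable
          ((hw.comp measurable_prodMk_left).mul hf).aemeasurable).trans ?_
        exact mul_le_mul_left ha _
    _ = C * ∫⁻ b, ∫⁻ a, k a b * (w a b * f b) ^ 2 ∂μ ∂ν := by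
        rw [lintegral_const_mul _ hkwf.lintegral_prod_right',
          lintegral_lintegral_swap hkwf.aemeasurable]
    _ = C * ∫⁻ b, (∫⁻ a, k a b * w a b ^ 2 ∂μ) * f b ^ 2 ∂ν := by
        congr 1
        refine lintegral_congr fun b => ?_
        rw [← lintegral_mul_const _ (by exact hkw.comp measurable_prodMk_right)]
        exact lintegral_congr fun a => by ring
    _ ≤ C * ∫⁻ b, S * f b ^ 2 ∂ν := by
        gcongr 1
        exact lintegral_mono_ae (hcol.mono fun b hb => mul_le_mul_left hb _)
    _ = C * S * ∫⁻ b, f b ^ 2 ∂ν := by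
        rw [lintegral_const_mul _ (hf.pow_const 2), mul_assoc]

theorem lintegral_lintegral_sq_lintegral_mul_le {ι α β : Type*} [MeasurableSpace ι]
    [MeasurableSpace α] [MeasurableSpace β] {ρ : Measure ι} {μ : Measure α} {ν : Measure β}
    [SFinite ρ] [SFinite μ] [SFinite ν] {k : α → β → ℝ≥0∞} {w : ι → α → β → ℝ≥0∞}
    {f : β → ℝ≥0∞} {C S : ℝ≥0∞} (hk : Measurable (Function.uncurry k))
    (hw : Measurable fun p : (ι × α) × β => w p.1.1 p.1.2 p.2) (hf : Measurable f)
    (hrow : ∀ᵐ a ∂μ, ∫⁻ b, k a b ∂ν ≤ C)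
    (hcol : ∀ᵐ b ∂ν, ∫⁻ a, k a b * ∫⁻ i, w i a b ^ 2 ∂ρ ∂μ ≤ S) :
    ∫⁻ i, ∫⁻ a, (∫⁻ b, k a b * (w i a b * f b) ∂ν) ^ 2 ∂μ ∂ρ ≤
      C * S * ∫⁻ b, f b ^ 2 ∂ν := by
  have hk' : Measurable fun p : (ι × α) × β => k p.1.2 p.2 :=
    hk.comp (measurable_fst.snd.prodMk measurable_snd)
  have hmeas : Measurable fun p : ι × α => (∫⁻ b, k p.2 b * (w p.1 p.2 b * f b) ∂ν) ^ 2 :=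
    (hk'.mul (hw.mul (hf.comp measurable_snd))).lintegral_prod_right'.pow_const 2
  have hcol' : ∀ᵐ b ∂ν, ∫⁻ p, k p.2 b * w p.1 p.2 b ^ 2 ∂ρ.prod μ ≤ S := by
    filter_upwards [hcol] with b hb
    have hwb : Measurable fun p : ι × α => w p.1 p.2 b ^ 2 :=
      (hw.comp measurable_prodMk_right).pow_const 2
    have hwab (a : α) : Measurable fun i => w i a b ^ 2 := hwb.comp measurable_prodMk_right
    have hkwb : Measurable fun p : ι × α => k p.2 b * w p.1 p.2 b ^ 2 :=
      (hk'.comp measurable_prodMk_right).mul hwb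
    rw [lintegral_prod_symm' _ hkwb]
    exact (lintegral_congr fun a => lintegral_const_mul _ (hwab a)).trans_le hb
  rw [← lintegral_prod _ hmeas.aemeasurable]
  exact lintegral_sq_lintegral_mul_le (k := fun (p : ι × α) b => k p.2 b)
    (w := fun p b => w p.1 p.2 b) hk' hw hf (Measure.quasiMeasurePreserving_snd.ae hrow) hcol'

theorem L2_enorm_sq {α E : Type*} [MeasurableSpace α] {μ : Measure α} [NormedAddCommGroup E]
    (ψ : Lp E 2 μ) : ‖ψ‖ₑ ^ 2 = ∫⁻ x, ‖ψ x‖ₑ ^ 2 ∂μ := by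
  have h := eLpNorm_nnreal_pow_eq_lintegral (f := ψ) (μ := μ) (p := 2) two_ne_zero
  rw [Lp.enorm_def]
  simpa only [NNReal.coe_ofNat, rpow_ofNat, coe_ofNat] using h

variable {X 𝕜 : Type*} [MeasurableSpace X] {μ : Measure X} [RCLike 𝕜] {K : X → X → 𝕜}
  {C : NNReal}

/-- The two-sided Schur condition on a kernel: `C` bounds the integrals of `‖K‖` along almost
every row and almost every column. -/
structure IsSchurKernel (μ : Measure X) (K : X → X → 𝕜) (C : NNReal) : Prop where
  measurable : Measurable (Function.uncurry K)
  row_le : ∀ᵐ x ∂μ, ∫⁻ x', ‖K x x'‖ₑ ∂μ ≤ C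
  col_le : ∀ᵐ x' ∂μ, ∫⁻ x, ‖K x x'‖ₑ ∂μ ≤ C

namespace IsSchurKernel

theorem of_ae_symm [SFinite μ] (hK : Measurable (Function.uncurry K))
    (hsymm : ∀ᵐ p ∂μ.prod μ, ‖K p.2 p.1‖ₑ = ‖K p.1 p.2‖ₑ)
    (hrow : ∀ᵐ x ∂μ, ∫⁻ x', ‖K x x'‖ₑ ∂μ ≤ C) : IsSchurKernel μ K C :=
  ⟨hK, hrow, ae_lintegral_swap_le (k := fun x x' => ‖K x x'‖ₑ) hsymm hrow⟩

theorem of_enorm_eq {K' : X → X → 𝕜} (hK : IsSchurKernel μ K C)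
    (hK' : Measurable (Function.uncurry K')) (h : ∀ x x', ‖K' x x'‖ₑ = ‖K x x'‖ₑ) :
    IsSchurKernel μ K' C :=
  ⟨hK', by simpa only [h] using hK.row_le, by simpa only [h] using hK.col_le⟩

theorem ae_integrable_mul [SFinite μ] (hK : IsSchurKernel μ K C) (ψ : Lp 𝕜 2 μ) :
    ∀ᵐ x ∂μ, Integrable (fun x' => K x x' * ψ x') μ := by
  have hψ : Measurable fun x => ‖ψ x‖ₑ := (Lp.stronglyMeasurable ψ).measurable.enorm
  have hm : Measurable fun x => ∫⁻ x', ‖K x x'‖ₑ * ‖ψ x'‖ₑ ∂μ :=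
    (hK.measurable.enorm.mul (hψ.comp measurable_snd)).lintegral_prod_right'
  have hfin : ∫⁻ x, (∫⁻ x', ‖K x x'‖ₑ * ‖ψ x'‖ₑ ∂μ) ^ 2 ∂μ ≠ ⊤ := by
    have h := lintegral_sq_lintegral_mul_le (w := fun _ _ => 1) (S := C) hK.measurable.enorm
      measurable_const hψ hK.row_le (by simpa using hK.col_le)
    simp only [one_mul, ← L2_enorm_sq] at h
    exact ne_top_of_le_ne_top (by finiteness) h
  filter_upwards [ae_lt_top (hm.pow_const 2) hfin] with x hx
  refine ⟨((hK.measurable.comp measurable_prodMk_left).mul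
    (Lp.stronglyMeasurable ψ).measurable).aestronglyMeasurable, ?_⟩
  rw [hasFiniteIntegral_iff_enorm]
  simp only [enorm_mul]
  exact (ENNReal.pow_lt_top_iff.1 hx).resolve_right two_ne_zero

end IsSchurKernel

end SchurTest

section Localization
variable {X 𝕜 : Type*} [MeasurableSpace X] {μ : Measure X} [RCLike 𝕜]
  {T₁ T₂ : Lp 𝕜 2 μ →L[𝕜] Lp 𝕜 2 μ} {K₁ K₂ : X → X → 𝕜}

namespace HasIntegralKernel

theorem sub_smul_apply_ae_eq (hT₁ : HasIntegralKernel T₁ K₁) (hT₂ : HasIntegralKernel T₂ K₂)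
    {ψ η : Lp 𝕜 2 μ} {g : X → 𝕜} (hη : η =ᵐ[μ] fun x => g x * ψ x)
    (hψ_int : ∀ᵐ x ∂μ, Integrable (fun x' => K₁ x x' * ψ x') μ)
    (hη_int : ∀ᵐ x ∂μ, Integrable (fun x' => K₂ x x' * η x') μ) (z : 𝕜) :
    ∀ᵐ x ∂μ, (T₂ η - z • η : Lp 𝕜 2 μ) x = g x * (T₁ ψ - z • ψ : Lp 𝕜 2 μ) x +
      ∫ x', (K₂ x x' * g x' - g x * K₁ x x') * ψ x' ∂μ := by
  filter_upwards [hT₁ ψ, hT₂ η, hψ_int, hη_int, hη, Lp.coeFn_sub (T₂ η) (z • η),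
    Lp.coeFn_smul z η, Lp.coeFn_sub (T₁ ψ) (z • ψ), Lp.coeFn_smul z ψ]
    with x hT₁x hT₂x hψx hηx hηgψ hsub₂ hsmul₂ hsub₁ hsmul₁
  have hsplit : ∫ x', (K₂ x x' * g x' - g x * K₁ x x') * ψ x' ∂μ =
      (∫ x', K₂ x x' * η x' ∂μ) - g x * ∫ x', K₁ x x' * ψ x' ∂μ := by
    rw [← integral_const_mul, ← integral_sub hηx (hψx.const_mul _)]
    refine integral_congr_ae (hη.mono fun x' hx' => ?_)
    simp only [hx']
    ring
  rw [hsplit, ← hT₁x, ← hT₂x, hsub₂, hsub₁, Pi.sub_apply, Pi.sub_apply, hsmul₂, hsmul₁,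
    Pi.smul_apply, Pi.smul_apply, hηgψ, smul_eq_mul, smul_eq_mul]
  ring

end HasIntegralKernel

theorem add_sq_le_two_mul_add_two_mul (a b : ℝ≥0∞) : (a + b) ^ 2 ≤ 2 * a ^ 2 + 2 * b ^ 2 := by
  rcases eq_or_ne a ⊤ with rfl | ha
  · simp
  rcases eq_or_ne b ⊤ with rfl | hb
  · simp
  lift a to NNReal using ha
  lift b to NNReal using hb
  rw [← mul_add]
  exact_mod_cast add_sq_le (a := a) (b := b)

theorem mul_lintegral_multiplier_sq_le [SFinite μ] {C₁ C₂ : NNReal}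
    (hT₁ : HasIntegralKernel T₁ K₁) (hT₂ : HasIntegralKernel T₂ K₂)
    (hK₁ : IsSchurKernel μ K₁ C₁) (hK₂ : IsSchurKernel μ K₂ C₂) {z : 𝕜} {δ : ℝ≥0∞}
    (hδ : ∀ v, δ * ‖v‖ₑ ≤ ‖T₂ v - z • v‖ₑ) {g : X → 𝕜} (hg : Measurable g)
    (hg1 : ∀ x, ‖g x‖ ≤ 1) (ψ : Lp 𝕜 2 μ) :
    δ ^ 2 * ∫⁻ x, ‖g x‖ₑ ^ 2 * ‖ψ x‖ₑ ^ 2 ∂μ ≤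
      2 * (∫⁻ x, ‖g x‖ₑ ^ 2 * ‖(T₁ ψ - z • ψ : Lp 𝕜 2 μ) x‖ₑ ^ 2 ∂μ) +
      2 * ∫⁻ x, (∫⁻ x', ‖K₂ x x' * g x' - g x * K₁ x x'‖ₑ * ‖ψ x'‖ₑ ∂μ) ^ 2 ∂μ := by
  have hmem : MemLp (fun x => g x * ψ x) 2 μ :=
    (Lp.memLp ψ).of_le (hg.aestronglyMeasurable.mul (Lp.aestronglyMeasurable ψ)) <|
      Eventually.of_forall fun x => by
        rw [norm_mul]
        exact mul_le_of_le_one_left (norm_nonneg _) (hg1 x)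
  obtain ⟨η, hη⟩ : ∃ η : Lp 𝕜 2 μ, η =ᵐ[μ] fun x => g x * ψ x := ⟨hmem.toLp _, hmem.coeFn_toLp⟩
  have hpt : ∀ᵐ x ∂μ, ‖(T₂ η - z • η : Lp 𝕜 2 μ) x‖ₑ ≤
      ‖g x‖ₑ * ‖(T₁ ψ - z • ψ : Lp 𝕜 2 μ) x‖ₑ +
        ∫⁻ x', ‖K₂ x x' * g x' - g x * K₁ x x'‖ₑ * ‖ψ x'‖ₑ ∂μ := by
    filter_upwards [hT₁.sub_smul_apply_ae_eq hT₂ hη (hK₁.ae_integrable_mul ψ)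
      (hK₂.ae_integrable_mul η) z] with x hx
    rw [hx, ← enorm_mul]
    refine (enorm_add_le _ _).trans (add_le_add_right ?_ _)
    simpa only [enorm_mul] using enorm_integral_le_lintegral_enorm (μ := μ)
      fun x' => (K₂ x x' * g x' - g x * K₁ x x') * ψ x'
  have hmeas : Measurable fun x => ‖g x‖ₑ ^ 2 * ‖(T₁ ψ - z • ψ : Lp 𝕜 2 μ) x‖ₑ ^ 2 :=
    (hg.enorm.pow_const 2).mul ((Lp.stronglyMeasurable _).measurable.enorm.pow_const 2)
  calc δ ^ 2 * ∫⁻ x, ‖g x‖ₑ ^ 2 * ‖ψ x‖ₑ ^ 2 ∂μ = (δ * ‖η‖ₑ) ^ 2 := by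
        rw [mul_pow, L2_enorm_sq]
        congr 1
        exact lintegral_congr_ae (hη.mono fun x hx => by simp only [hx, enorm_mul, mul_pow])
    _ ≤ ‖T₂ η - z • η‖ₑ ^ 2 := by gcongr; exact hδ η
    _ = ∫⁻ x, ‖(T₂ η - z • η : Lp 𝕜 2 μ) x‖ₑ ^ 2 ∂μ := L2_enorm_sq _
    _ ≤ ∫⁻ x, (2 * (‖g x‖ₑ ^ 2 * ‖(T₁ ψ - z • ψ : Lp 𝕜 2 μ) x‖ₑ ^ 2) +
          2 * (∫⁻ x', ‖K₂ x x' * g x' - g x * K₁ x x'‖ₑ * ‖ψ x'‖ₑ ∂μ) ^ 2) ∂μ := by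
        refine lintegral_mono_ae (hpt.mono fun x hx => ?_)
        rw [← mul_pow]
        exact (pow_le_pow_left' hx 2).trans (add_sq_le_two_mul_add_two_mul _ _)
    _ = _ := by
        rw [lintegral_add_left (hmeas.const_mul 2), lintegral_const_mul _ hmeas,
          lintegral_const_mul' _ _ ofNat_ne_top]

end Localization

section MagneticPhase
variable {X : Type*}

/-- The magnetic phase `e^{ibφ(x,y)}` at field strength `b`. -/
def magneticPhase (b : ℝ) (φ : X → X → ℝ) (x y : X) : ℂ := Complex.exp (Complex.I * b * φ x y)

theorem magneticPhase_eq_exp_ofReal (b : ℝ) (φ : X → X → ℝ) (x y : X) :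
    magneticPhase b φ x y = Complex.exp (Complex.I * (b * φ x y : ℝ)) := by
  rw [magneticPhase, Complex.ofReal_mul, mul_assoc]

@[simp]
theorem norm_magneticPhase (b : ℝ) (φ : X → X → ℝ) (x y : X) : ‖magneticPhase b φ x y‖ = 1 := by
  rw [magneticPhase_eq_exp_ofReal, mul_comm, Complex.norm_exp_ofReal_mul_I]

@[simp]
theorem magneticPhase_zero (φ : X → X → ℝ) (x y : X) : magneticPhase 0 φ x y = 1 := by
  simp [magneticPhase]

theorem magneticPhase_mul_magneticPhase (b c : ℝ) (φ : X → X → ℝ) (x y : X) :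
    magneticPhase b φ x y * magneticPhase c φ x y = magneticPhase (b + c) φ x y := by
  simp only [magneticPhase, ← Complex.exp_add]
  push_cast
  ring_nf

theorem measurable_magneticPhase [MeasurableSpace X] (b : ℝ) {φ : X → X → ℝ}
    (hφ : Measurable (Function.uncurry φ)) :
    Measurable (Function.uncurry (magneticPhase b φ)) :=
  Complex.measurable_exp.comp ((Complex.measurable_ofReal.comp hφ).const_mul (Complex.I * b))

theorem norm_exp_I_mul_sub_exp_I_mul_le (s t : ℝ) :
    ‖Complex.exp (Complex.I * s) - Complex.exp (Complex.I * t)‖ ≤ |s - t| := by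
  have h : Complex.exp (Complex.I * s) - Complex.exp (Complex.I * t) =
      Complex.exp (Complex.I * t) * (Complex.exp (Complex.I * (s - t : ℝ)) - 1) := by
    rw [mul_sub, ← Complex.exp_add, mul_one]
    congr 2
    push_cast
    ring
  rw [h, norm_mul, mul_comm Complex.I (t : ℂ), Complex.norm_exp_ofReal_mul_I, one_mul]
  exact Real.norm_exp_I_mul_ofReal_sub_one_le

theorem norm_magneticPhase_mul_magneticPhase_sub_le (b : ℝ) (φ : X → X → ℝ) (x y x' : X) :
    ‖magneticPhase b φ x y * magneticPhase b φ y x' - magneticPhase b φ x x'‖ ≤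
      |b| * |φ x y + φ y x' - φ x x'| := by
  have hmul : magneticPhase b φ x y * magneticPhase b φ y x' =
      Complex.exp (Complex.I * (b * (φ x y + φ y x') : ℝ)) := by
    simp only [magneticPhase, ← Complex.exp_add]
    push_cast
    ring_nf
  rw [hmul, magneticPhase_eq_exp_ofReal b φ x x', ← abs_mul, mul_sub]
  exact norm_exp_I_mul_sub_exp_I_mul_le _ _

/-- The kernel `e^{ibφ(x,x')} K(x,x')` of the magnetic perturbation of the operator with
kernel `K`. -/
def magneticKernel (b : ℝ) (φ : X → X → ℝ) (K : X → X → ℂ) (x x' : X) : ℂ :=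
  magneticPhase b φ x x' * K x x'

@[simp]
theorem magneticKernel_zero (φ : X → X → ℝ) (K : X → X → ℂ) : magneticKernel 0 φ K = K := by
  ext x x'
  simp [magneticKernel]

theorem magneticKernel_magneticKernel (b c : ℝ) (φ : X → X → ℝ) (K : X → X → ℂ) :
    magneticKernel b φ (magneticKernel c φ K) = magneticKernel (b + c) φ K := by
  ext x x'
  rw [magneticKernel, magneticKernel, magneticKernel, ← mul_assoc,
    magneticPhase_mul_magneticPhase]

@[simp]
theorem enorm_magneticKernel (b : ℝ) (φ : X → X → ℝ) (K : X → X → ℂ) (x x' : X) :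
    ‖magneticKernel b φ K x x'‖ₑ = ‖K x x'‖ₑ := by
  rw [magneticKernel, enorm_mul, ← ofReal_norm, norm_magneticPhase, ofReal_one, one_mul]

theorem IsSchurKernel.magneticKernel [MeasurableSpace X] {μ : Measure X} {K : X → X → ℂ}
    {C : NNReal} (hK : IsSchurKernel μ K C) (b : ℝ) {φ : X → X → ℝ}
    (hφ : Measurable (Function.uncurry φ)) : IsSchurKernel μ (magneticKernel b φ K) C :=
  hK.of_enorm_eq ((measurable_magneticPhase b hφ).mul hK.measurable)
    (enorm_magneticKernel b φ K)

/-- The part of the kernel `K` beyond the band `‖x - x'‖ ≤ M`, that is, the kernel of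
`H - H_M`. -/
def offBand [Norm X] [Sub X] {𝕜 : Type*} [Zero 𝕜] (M : ℝ) (K : X → X → 𝕜) (x x' : X) : 𝕜 :=
  if M < ‖x - x'‖ then K x x' else 0

theorem offBand_magneticKernel [Norm X] [Sub X] (M b : ℝ) (φ : X → X → ℝ) (K : X → X → ℂ) :
    offBand M (magneticKernel b φ K) = magneticKernel b φ (offBand M K) := by
  ext x x'
  simp only [offBand, magneticKernel, mul_ite, mul_zero]

end MagneticPhase

section Tent
variable {V : Type*} [NormedAddCommGroup V] {R : ℝ}

/-- The tent function of radius `R`: a Lipschitz cutoff equal to `1` at the origin and vanishing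
outside the ball of radius `R`. -/
def tent (R : ℝ) (v : V) : ℝ := max 0 (1 - ‖v‖ / R)

theorem tent_nonneg (R : ℝ) (v : V) : 0 ≤ tent R v := le_max_left _ _

theorem tent_le_one (hR : 0 ≤ R) (v : V) : tent R v ≤ 1 :=
  max_le zero_le_one (sub_le_self _ (by positivity))

theorem tent_eq_zero (hR : 0 < R) {v : V} (hv : R ≤ ‖v‖) : tent R v = 0 :=
  max_eq_left (sub_nonpos.2 ((one_le_div hR).2 hv))

theorem half_le_tent (hR : 0 < R) {v : V} (hv : ‖v‖ ≤ R / 2) : 1 / 2 ≤ tent R v := by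
  have h : ‖v‖ / R ≤ 1 / 2 := (div_le_iff₀ hR).2 (by linarith)
  exact le_max_of_le_right (by linarith)

theorem continuous_tent (R : ℝ) : Continuous (tent R : V → ℝ) :=
  continuous_const.max (continuous_const.sub (continuous_norm.div_const R))

theorem abs_tent_sub_tent_le (hR : 0 ≤ R) (u v : V) : |tent R u - tent R v| ≤ ‖u - v‖ / R := by
  refine (abs_max_sub_max_le_max 0 _ 0 _).trans (max_le ?_ ?_)
  · rw [sub_self, abs_zero]
    positivity
  · rw [show 1 - ‖u‖ / R - (1 - ‖v‖ / R) = (‖v‖ - ‖u‖) / R by ring, abs_div,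
      abs_of_nonneg hR, norm_sub_rev u v]
    gcongr
    exact abs_norm_sub_norm_le v u

/-- The squared `L²` norm of the tent of radius `R`. -/
def tentMass [MeasurableSpace V] (μ : Measure V) (R : ℝ) : ℝ≥0∞ :=
  ∫⁻ v, ENNReal.ofReal (tent R v) ^ 2 ∂μ

theorem measure_closedBall_half_le_tentMass [MeasurableSpace V] [BorelSpace V] (μ : Measure V)
    (hR : 0 < R) : μ (Metric.closedBall (0 : V) (R / 2)) ≤ 4 * tentMass μ R := by
  rw [tentMass, ← lintegral_const_mul' _ _ ofNat_ne_top,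
    ← lintegral_indicator_one Metric.isClosed_closedBall.measurableSet]
  refine lintegral_mono fun v => ?_
  by_cases hv : v ∈ Metric.closedBall (0 : V) (R / 2)
  · have ht := half_le_tent hR (mem_closedBall_zero_iff.1 hv)
    rw [Set.indicator_of_mem hv, Pi.one_apply, ← ofReal_pow (tent_nonneg _ _),
      ← ofReal_ofNat 4, ← ofReal_mul (by norm_num), one_le_ofReal]
    nlinarith
  · rw [Set.indicator_of_notMem hv]
    exact zero_le

end Tent

section TentMass
variable {E : Type*} [NormedAddCommGroup E] [NormedSpace ℝ E] [FiniteDimensional ℝ E]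
  [MeasurableSpace E] [BorelSpace E] (μ : Measure E) [μ.IsAddHaarMeasure] {R : ℝ}

theorem tentMass_ne_top (hR : 0 < R) : tentMass μ R ≠ ⊤ := by
  refine ne_top_of_le_ne_top (b := μ (Metric.closedBall 0 R)) measure_closedBall_lt_top.ne ?_
  rw [← lintegral_indicator_one Metric.isClosed_closedBall.measurableSet]
  refine lintegral_mono fun v => ?_
  by_cases hv : v ∈ Metric.closedBall (0 : E) R
  · rw [Set.indicator_of_mem hv, Pi.one_apply]
    exact pow_le_one' (ofReal_le_one.2 (tent_le_one hR.le v)) 2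
  · rw [mem_closedBall_zero_iff, not_le] at hv
    simp [tent_eq_zero hR hv.le]

theorem measure_closedBall_le_tentMass (hR : 0 < R) :
    μ (Metric.closedBall 0 R) ≤ 2 ^ (Module.finrank ℝ E + 2) * tentMass μ R := by
  calc μ (Metric.closedBall 0 R)
      = 2 ^ Module.finrank ℝ E * μ (Metric.closedBall 0 (R / 2)) := by
        have h := Measure.addHaar_closedBall_mul μ (0 : E) zero_le_two (half_pos hR).le
        rwa [mul_div_cancel₀ _ two_ne_zero, ofReal_pow zero_le_two, ofReal_ofNat] at h
    _ ≤ 2 ^ Module.finrank ℝ E * (4 * tentMass μ R) := by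
        gcongr
        exact measure_closedBall_half_le_tentMass μ hR
    _ = 2 ^ (Module.finrank ℝ E + 2) * tentMass μ R := by
        rw [pow_add, mul_assoc]
        norm_num

end TentMass

section GaugeTent
variable {V : Type*} [NormedAddCommGroup V] {φ : V → V → ℝ} {R : ℝ}

/-- The tent of radius `R` centred at `y`, twisted by the magnetic phase based at `y`. -/
def gaugeTent (b : ℝ) (φ : V → V → ℝ) (R : ℝ) (y x : V) : ℂ :=
  magneticPhase b φ x y * tent R (x - y)

/-- The failure of multiplication by `gaugeTent b φ R y` to intertwine a kernel `K` with
`magneticKernel b φ K`, per unit of `K(x,x')`. -/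
def gaugeDefect (b : ℝ) (φ : V → V → ℝ) (R : ℝ) (y x x' : V) : ℂ :=
  magneticPhase b φ x x' * gaugeTent b φ R y x' - gaugeTent b φ R y x

theorem magneticKernel_mul_gaugeTent_sub (b : ℝ) (φ : V → V → ℝ) (R : ℝ) (K : V → V → ℂ)
    (y x x' : V) :
    magneticKernel b φ K x x' * gaugeTent b φ R y x' - gaugeTent b φ R y x * K x x' =
      K x x' * gaugeDefect b φ R y x x' := by
  rw [magneticKernel, gaugeDefect]
  ring

theorem norm_gaugeTent (b : ℝ) (φ : V → V → ℝ) (R : ℝ) (y x : V) :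
    ‖gaugeTent b φ R y x‖ = tent R (x - y) := by
  rw [gaugeTent, norm_mul, norm_magneticPhase, one_mul, Complex.norm_real,
    Real.norm_of_nonneg (tent_nonneg _ _)]

theorem norm_gaugeTent_le_one (b : ℝ) (φ : V → V → ℝ) (hR : 0 ≤ R) (y x : V) :
    ‖gaugeTent b φ R y x‖ ≤ 1 :=
  (norm_gaugeTent b φ R y x).trans_le (tent_le_one hR _)

theorem gaugeTent_eq_zero (b : ℝ) (φ : V → V → ℝ) (hR : 0 < R) {y x : V}
    (hx : y ∉ Metric.closedBall x R) : gaugeTent b φ R y x = 0 := by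
  rw [mem_closedBall_iff_norm', not_le] at hx
  rw [gaugeTent, tent_eq_zero hR hx.le, Complex.ofReal_zero, mul_zero]

theorem norm_gaugeDefect_le_two (b : ℝ) (φ : V → V → ℝ) (hR : 0 ≤ R) (y x x' : V) :
    ‖gaugeDefect b φ R y x x'‖ ≤ 2 := by
  refine (norm_sub_le _ _).trans ?_
  rw [norm_mul, norm_magneticPhase, one_mul]
  linarith [norm_gaugeTent_le_one b φ hR y x, norm_gaugeTent_le_one b φ hR y x']

/-- The first term is the magnetic flux through triangles of sides at most `M` and `R`, the
second the oscillation of the cutoff across the band. -/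
theorem norm_gaugeDefect_le (htri : ∀ x y x', |φ x y + φ y x' - φ x x'| ≤ ‖x - y‖ * ‖y - x'‖)
    (b : ℝ) {M : ℝ} (hR : 0 < R) {x x' : V} (hM : ‖x - x'‖ ≤ M) (y : V) :
    ‖gaugeDefect b φ R y x x'‖ ≤ |b| * M * R + M / R := by
  have hM0 : 0 ≤ M := (norm_nonneg _).trans hM
  have hsplit : gaugeDefect b φ R y x x' =
      (magneticPhase b φ x x' * magneticPhase b φ x' y - magneticPhase b φ x y) *
          tent R (x' - y) +
        magneticPhase b φ x y * ((tent R (x' - y) - tent R (x - y) : ℝ) : ℂ) := by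
    rw [gaugeDefect, gaugeTent, gaugeTent]
    push_cast
    ring
  have hflux : ‖magneticPhase b φ x x' * magneticPhase b φ x' y - magneticPhase b φ x y‖ *
      tent R (x' - y) ≤ |b| * M * R := by
    rcases le_total R ‖x' - y‖ with h | h
    · rw [tent_eq_zero hR h, mul_zero]
      positivity
    · calc _ ≤ |b| * (‖x - x'‖ * ‖x' - y‖) * 1 := by
            gcongr
            · exact tent_nonneg _ _
            · exact (norm_magneticPhase_mul_magneticPhase_sub_le b φ x x' y).trans
                (mul_le_mul_of_nonneg_left (htri x x' y) (abs_nonneg b))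
            · exact tent_le_one hR.le _
        _ ≤ |b| * (M * R) * 1 := by gcongr
        _ = |b| * M * R := by ring
  have hcut : |tent R (x' - y) - tent R (x - y)| ≤ M / R := by
    refine (abs_tent_sub_tent_le hR.le _ _).trans ?_
    rw [sub_sub_sub_cancel_right, norm_sub_rev]
    gcongr
  rw [hsplit]
  refine (norm_add_le _ _).trans (add_le_add ?_ ?_)
  · rwa [norm_mul, Complex.norm_real, Real.norm_of_nonneg (tent_nonneg _ _)]
  · rwa [norm_mul, norm_magneticPhase, one_mul, Complex.norm_real]

theorem enorm_gaugeDefect_sq_le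
    (htri : ∀ x y x', |φ x y + φ y x' - φ x x'| ≤ ‖x - y‖ * ‖y - x'‖) (b : ℝ) {M a : ℝ}
    (hR : 0 < R) (ha : |b| * M * R + M / R ≤ a) (y x x' : V) :
    ‖gaugeDefect b φ R y x x'‖ₑ ^ 2 ≤
      (Metric.closedBall x R ∪ Metric.closedBall x' R).indicator
        (fun _ => ENNReal.ofReal a ^ 2 + if M < ‖x - x'‖ then 4 else 0) y := by
  by_cases hy : y ∈ Metric.closedBall x R ∪ Metric.closedBall x' R
  · rw [Set.indicator_of_mem hy, ← ofReal_norm]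
    split_ifs with h
    · calc ENNReal.ofReal ‖gaugeDefect b φ R y x x'‖ ^ 2 ≤ ENNReal.ofReal 2 ^ 2 := by
            gcongr
            exact norm_gaugeDefect_le_two b φ hR.le y x x'
        _ = 4 := by norm_num
        _ ≤ ENNReal.ofReal a ^ 2 + 4 := le_add_self
    · rw [add_zero]
      gcongr
      exact (norm_gaugeDefect_le htri b hR (not_lt.1 h) y).trans ha
  · rw [Set.mem_union, not_or] at hy
    simp [gaugeDefect, gaugeTent_eq_zero b φ hR hy.1, gaugeTent_eq_zero b φ hR hy.2]

variable [MeasurableSpace V] [BorelSpace V]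

theorem lintegral_enorm_gaugeTent_sq (μ : Measure V) [μ.IsAddLeftInvariant] [μ.IsNegInvariant]
    (b : ℝ) (φ : V → V → ℝ) (R : ℝ) (x : V) :
    ∫⁻ y, ‖gaugeTent b φ R y x‖ₑ ^ 2 ∂μ = tentMass μ R := by
  simp only [← ofReal_norm, norm_gaugeTent]
  exact lintegral_sub_left_eq_self (fun v => ENNReal.ofReal (tent R v) ^ 2) x

variable [SecondCountableTopology V]

theorem measurable_gaugeTent (b : ℝ) (hφ : Measurable (Function.uncurry φ)) (R : ℝ) :
    Measurable (Function.uncurry (gaugeTent b φ R)) :=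
  ((measurable_magneticPhase b hφ).comp measurable_swap).mul <| Complex.measurable_ofReal.comp <|
    (continuous_tent R).measurable.comp (measurable_snd.sub measurable_fst)

theorem measurable_gaugeDefect (b : ℝ) (hφ : Measurable (Function.uncurry φ)) (R : ℝ) :
    Measurable fun p : (V × V) × V => gaugeDefect b φ R p.1.1 p.1.2 p.2 :=
  (((measurable_magneticPhase b hφ).comp (measurable_fst.snd.prodMk measurable_snd)).mul
    ((measurable_gaugeTent b hφ R).comp (measurable_fst.fst.prodMk measurable_snd))).sub
    ((measurable_gaugeTent b hφ R).comp measurable_fst)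

theorem lintegral_lintegral_enorm_gaugeTent_sq_mul (μ : Measure V) [SFinite μ]
    [μ.IsAddLeftInvariant] [μ.IsNegInvariant] (b : ℝ) (hφ : Measurable (Function.uncurry φ))
    (R : ℝ) {F : V → ℝ≥0∞} (hF : Measurable F) :
    ∫⁻ y, ∫⁻ x, ‖gaugeTent b φ R y x‖ₑ ^ 2 * F x ∂μ ∂μ = tentMass μ R * ∫⁻ x, F x ∂μ := by
  have hg := (measurable_gaugeTent b hφ R).enorm.pow_const 2
  rw [lintegral_lintegral_swap (hg.mul (hF.comp measurable_snd)).aemeasurable,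
    ← lintegral_const_mul _ hF]
  have hgx (x : V) : Measurable fun y => ‖gaugeTent b φ R y x‖ₑ ^ 2 :=
    (measurable_gaugeTent b hφ R).of_uncurry_right.enorm.pow_const 2
  exact lintegral_congr fun x => by
    rw [lintegral_mul_const _ (hgx x), lintegral_enorm_gaugeTent_sq]

end GaugeTent

section GaugeDefectMass
variable {E : Type*} [NormedAddCommGroup E] [NormedSpace ℝ E] [FiniteDimensional ℝ E]
  [MeasurableSpace E] [BorelSpace E] (μ : Measure E) [μ.IsAddHaarMeasure] {φ : E → E → ℝ}

theorem lintegral_enorm_gaugeDefect_sq_le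
    (htri : ∀ x y x', |φ x y + φ y x' - φ x x'| ≤ ‖x - y‖ * ‖y - x'‖) (b : ℝ) {R M a : ℝ}
    (hR : 0 < R) (ha : |b| * M * R + M / R ≤ a) (x x' : E) :
    ∫⁻ y, ‖gaugeDefect b φ R y x x'‖ₑ ^ 2 ∂μ ≤
      (ENNReal.ofReal a ^ 2 + if M < ‖x - x'‖ then 4 else 0) *
        (2 ^ (Module.finrank ℝ E + 3) * tentMass μ R) := by
  set c : ℝ≥0∞ := ENNReal.ofReal a ^ 2 + if M < ‖x - x'‖ then 4 else 0
  have hball : MeasurableSet (Metric.closedBall x R ∪ Metric.closedBall x' R) :=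
    Metric.isClosed_closedBall.measurableSet.union Metric.isClosed_closedBall.measurableSet
  calc ∫⁻ y, ‖gaugeDefect b φ R y x x'‖ₑ ^ 2 ∂μ
      ≤ ∫⁻ y, (Metric.closedBall x R ∪ Metric.closedBall x' R).indicator (fun _ => c) y ∂μ :=
        lintegral_mono fun y => enorm_gaugeDefect_sq_le htri b hR ha y x x'
    _ = c * μ (Metric.closedBall x R ∪ Metric.closedBall x' R) := by
        rw [lintegral_indicator hball, setLIntegral_const]
    _ ≤ c * (2 * μ (Metric.closedBall 0 R)) := by
        gcongr
        refine (measure_union_le _ _).trans_eq ?_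
        rw [Measure.addHaar_closedBall_center, Measure.addHaar_closedBall_center μ x', two_mul]
    _ ≤ c * (2 * (2 ^ (Module.finrank ℝ E + 2) * tentMass μ R)) := by
        gcongr
        exact measure_closedBall_le_tentMass μ hR
    _ = c * (2 ^ (Module.finrank ℝ E + 3) * tentMass μ R) := by ring

end GaugeDefectMass

section GaugeLocalization
variable {E : Type*} [NormedAddCommGroup E] [NormedSpace ℝ E] [FiniteDimensional ℝ E]
  [MeasurableSpace E] [BorelSpace E] {μ : Measure E} [μ.IsAddHaarMeasure] {φ : E → E → ℝ}
  {K : E → E → ℂ} {C ε : NNReal} {b R M a : ℝ}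

theorem ae_lintegral_enorm_mul_lintegral_gaugeDefect_le (hK : IsSchurKernel μ K C)
    (hKM : IsSchurKernel μ (offBand M K) ε)
    (htri : ∀ x y x', |φ x y + φ y x' - φ x x'| ≤ ‖x - y‖ * ‖y - x'‖)
    (hR : 0 < R) (ha : |b| * M * R + M / R ≤ a) :
    ∀ᵐ x' ∂μ, ∫⁻ x, ‖K x x'‖ₑ * ∫⁻ y, ‖gaugeDefect b φ R y x x'‖ₑ ^ 2 ∂μ ∂μ ≤
      (ENNReal.ofReal a ^ 2 * C + 4 * ε) * (2 ^ (Module.finrank ℝ E + 3) * tentMass μ R) := by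
  set S : ℝ≥0∞ := 2 ^ (Module.finrank ℝ E + 3) * tentMass μ R
  have hS : S ≠ ⊤ := mul_ne_top (by finiteness) (tentMass_ne_top μ hR)
  filter_upwards [hK.col_le, hKM.col_le] with x' hcol hcolM
  have hKx : Measurable fun x => ‖K x x'‖ₑ := hK.measurable.of_uncurry_right.enorm
  calc ∫⁻ x, ‖K x x'‖ₑ * ∫⁻ y, ‖gaugeDefect b φ R y x x'‖ₑ ^ 2 ∂μ ∂μ
      ≤ ∫⁻ x, ‖K x x'‖ₑ *
          ((ENNReal.ofReal a ^ 2 + if M < ‖x - x'‖ then 4 else 0) * S) ∂μ := by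
        gcongr with x
        exact lintegral_enorm_gaugeDefect_sq_le μ htri b hR ha x x'
    _ = ∫⁻ x, (ENNReal.ofReal a ^ 2 * ‖K x x'‖ₑ + 4 * ‖offBand M K x x'‖ₑ) * S ∂μ := by
        refine lintegral_congr fun x => ?_
        unfold offBand
        split_ifs
        · ring
        · rw [enorm_zero]
          ring
    _ = (ENNReal.ofReal a ^ 2 * ∫⁻ x, ‖K x x'‖ₑ ∂μ +
          4 * ∫⁻ x, ‖offBand M K x x'‖ₑ ∂μ) * S := by
        rw [lintegral_mul_const' _ _ hS, lintegral_add_left (hKx.const_mul _),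
          lintegral_const_mul _ hKx, lintegral_const_mul' _ _ ofNat_ne_top]
    _ ≤ (ENNReal.ofReal a ^ 2 * C + 4 * ε) * S := by gcongr

theorem lintegral_sq_lintegral_gaugeDefect_le (hK : IsSchurKernel μ K C)
    (hKM : IsSchurKernel μ (offBand M K) ε) (hφ : Measurable (Function.uncurry φ))
    (htri : ∀ x y x', |φ x y + φ y x' - φ x x'| ≤ ‖x - y‖ * ‖y - x'‖)
    (hR : 0 < R) (ha : |b| * M * R + M / R ≤ a) (ψ : Lp ℂ 2 μ) :
    ∫⁻ y, ∫⁻ x, (∫⁻ x', ‖K x x' * gaugeDefect b φ R y x x'‖ₑ * ‖ψ x'‖ₑ ∂μ) ^ 2 ∂μ ∂μ ≤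
      C * ((ENNReal.ofReal a ^ 2 * C + 4 * ε) * (2 ^ (Module.finrank ℝ E + 3) * tentMass μ R)) *
        ‖ψ‖ₑ ^ 2 := by
  simp only [enorm_mul, mul_assoc (‖K _ _‖ₑ), L2_enorm_sq]
  exact lintegral_lintegral_sq_lintegral_mul_le (k := fun x x' => ‖K x x'‖ₑ)
    (w := fun y x x' => ‖gaugeDefect b φ R y x x'‖ₑ) hK.measurable.enorm
    (measurable_gaugeDefect b hφ R).enorm (Lp.stronglyMeasurable ψ).measurable.enorm hK.row_le
    (ae_lintegral_enorm_mul_lintegral_gaugeDefect_le hK hKM htri hR ha)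

/-- Integrating the localized inequalities over all centres `y` of the gauge tents. -/
theorem mul_enorm_sq_le_of_magneticKernel {T₁ T₂ : Lp ℂ 2 μ →L[ℂ] Lp ℂ 2 μ}
    (hT₁ : HasIntegralKernel T₁ K) (hT₂ : HasIntegralKernel T₂ (magneticKernel b φ K))
    (hK : IsSchurKernel μ K C) (hKM : IsSchurKernel μ (offBand M K) ε)
    (hφ : Measurable (Function.uncurry φ))
    (htri : ∀ x y x', |φ x y + φ y x' - φ x x'| ≤ ‖x - y‖ * ‖y - x'‖)
    (hR : 0 < R) (ha : |b| * M * R + M / R ≤ a) {z : ℂ} {δ : ℝ≥0∞} (hδ_top : δ ≠ ⊤)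
    (hδ : ∀ v, δ * ‖v‖ₑ ≤ ‖T₂ v - z • v‖ₑ) (ψ : Lp ℂ 2 μ) :
    δ ^ 2 * ‖ψ‖ₑ ^ 2 ≤ 2 * ‖T₁ ψ - z • ψ‖ₑ ^ 2 +
      2 ^ (Module.finrank ℝ E + 4) * (C * (ENNReal.ofReal a ^ 2 * C + 4 * ε)) * ‖ψ‖ₑ ^ 2 := by
  set N := tentMass μ R
  have hN_top : N ≠ ⊤ := tentMass_ne_top μ hR
  have hN : N ≠ 0 := fun h => (Metric.measure_closedBall_pos μ (0 : E) hR).ne' <| by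
    simpa [N, h] using measure_closedBall_le_tentMass μ hR
  have hmeas (η : Lp ℂ 2 μ) : Measurable fun x => ‖η x‖ₑ ^ 2 :=
    (Lp.stronglyMeasurable η).measurable.enorm.pow_const 2
  have hg := measurable_gaugeTent b hφ R
  have haverage (η : Lp ℂ 2 μ) :
      ∫⁻ y, ∫⁻ x, ‖gaugeTent b φ R y x‖ₑ ^ 2 * ‖η x‖ₑ ^ 2 ∂μ ∂μ = N * ‖η‖ₑ ^ 2 := by
    rw [lintegral_lintegral_enorm_gaugeTent_sq_mul μ b hφ R (hmeas η), L2_enorm_sq]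
  have hlocal (y : E) : δ ^ 2 * ∫⁻ x, ‖gaugeTent b φ R y x‖ₑ ^ 2 * ‖ψ x‖ₑ ^ 2 ∂μ ≤
      2 * (∫⁻ x, ‖gaugeTent b φ R y x‖ₑ ^ 2 * ‖(T₁ ψ - z • ψ : Lp ℂ 2 μ) x‖ₑ ^ 2 ∂μ) +
      2 * ∫⁻ x, (∫⁻ x', ‖K x x' * gaugeDefect b φ R y x x'‖ₑ * ‖ψ x'‖ₑ ∂μ) ^ 2 ∂μ := by
    simpa only [magneticKernel_mul_gaugeTent_sub] using
      mul_lintegral_multiplier_sq_le hT₁ hT₂ hK (hK.magneticKernel b hφ) hδ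
        hg.of_uncurry_left (norm_gaugeTent_le_one b φ hR.le y) ψ
  refine (ENNReal.mul_le_mul_iff_right hN hN_top).1 ?_
  have hres : Measurable fun y => ∫⁻ x, ‖gaugeTent b φ R y x‖ₑ ^ 2 *
      ‖(T₁ ψ - z • ψ : Lp ℂ 2 μ) x‖ₑ ^ 2 ∂μ :=
    ((hg.enorm.pow_const 2).mul ((hmeas _).comp measurable_snd)).lintegral_prod_right'
  calc N * (δ ^ 2 * ‖ψ‖ₑ ^ 2)
      = ∫⁻ y, δ ^ 2 * ∫⁻ x, ‖gaugeTent b φ R y x‖ₑ ^ 2 * ‖ψ x‖ₑ ^ 2 ∂μ ∂μ := by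
        rw [lintegral_const_mul' _ _ (by finiteness), haverage, mul_left_comm]
    _ ≤ _ := lintegral_mono hlocal
    _ = 2 * (N * ‖T₁ ψ - z • ψ‖ₑ ^ 2) + 2 * ∫⁻ y, ∫⁻ x, (∫⁻ x',
          ‖K x x' * gaugeDefect b φ R y x x'‖ₑ * ‖ψ x'‖ₑ ∂μ) ^ 2 ∂μ ∂μ := by
        rw [lintegral_add_left (hres.const_mul 2), lintegral_const_mul _ hres,
          lintegral_const_mul' _ _ ofNat_ne_top, haverage]
    _ ≤ 2 * (N * ‖T₁ ψ - z • ψ‖ₑ ^ 2) + 2 * (C * ((ENNReal.ofReal a ^ 2 * C + 4 * ε) *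
          (2 ^ (Module.finrank ℝ E + 3) * N)) * ‖ψ‖ₑ ^ 2) := by
        gcongr
        exact lintegral_sq_lintegral_gaugeDefect_le hK hKM hφ htri hR ha ψ
    _ = _ := by ring

theorem sq_infDist_spectrum_le_of_magneticKernel {T₁ T₂ : Lp ℂ 2 μ →L[ℂ] Lp ℂ 2 μ}
    (hT₁_normal : IsStarNormal T₁) (hT₂_normal : IsStarNormal T₂)
    (hT₁ : HasIntegralKernel T₁ K) (hT₂ : HasIntegralKernel T₂ (magneticKernel b φ K))
    (hK : IsSchurKernel μ K C) (hKM : IsSchurKernel μ (offBand M K) ε)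
    (hφ : Measurable (Function.uncurry φ))
    (htri : ∀ x y x', |φ x y + φ y x' - φ x x'| ≤ ‖x - y‖ * ‖y - x'‖)
    (hb : b ≠ 0) (hM : 0 ≤ M) {z : ℂ} (hz : z ∈ spectrum ℂ T₁) :
    Metric.infDist z (spectrum ℂ T₂) ^ 2 ≤
      2 ^ (Module.finrank ℝ E + 6) * C * (M ^ 2 * |b| * C + ε) := by
  set δ := (Metric.infDist z (spectrum ℂ T₂)).toNNReal
  have hδ : (δ : ℝ) = Metric.infDist z (spectrum ℂ T₂) :=
    Real.coe_toNNReal _ Metric.infDist_nonneg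
  have hδ_le (v : Lp ℂ 2 μ) : (δ : ℝ≥0∞) * ‖v‖ₑ ≤ ‖T₂ v - z • v‖ₑ := by
    have h := infDist_spectrum_mul_norm_le hT₂_normal z v
    rw [← hδ] at h
    simp only [enorm_eq_nnnorm]
    exact_mod_cast h
  -- The radius balancing the flux error `|b| * M * R` against the cutoff error `M / R`.
  have hsqrt : 0 < √|b| := Real.sqrt_pos.2 (abs_pos.2 hb)
  obtain ⟨a, ha⟩ : ∃ a : NNReal, (a : ℝ) = 2 * M * √|b| := ⟨⟨_, by positivity⟩, rfl⟩
  have herror : |b| * M * (1 / √|b|) + M / (1 / √|b|) ≤ a := by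
    nth_rw 1 [ha, ← Real.mul_self_sqrt (abs_nonneg b)]
    field_simp
    norm_num
  have hbound (v : Lp ℂ 2 μ) : (δ ^ 2 - 2 ^ (Module.finrank ℝ E + 4) * (C * (a ^ 2 * C + 4 * ε)))
      / 2 * ‖v‖ ^ 2 ≤ ‖T₁ v - z • v‖ ^ 2 := by
    have h := mul_enorm_sq_le_of_magneticKernel hT₁ hT₂ hK hKM hφ htri (by positivity) herror
      coe_ne_top hδ_le v
    rw [ofReal_coe_nnreal] at h
    have h' : (δ : ℝ) ^ 2 * ‖v‖ ^ 2 ≤ 2 * ‖T₁ v - z • v‖ ^ 2 +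
        2 ^ (Module.finrank ℝ E + 4) * (C * (a ^ 2 * C + 4 * ε)) * ‖v‖ ^ 2 := by
      simp only [enorm_eq_nnnorm] at h
      exact_mod_cast h
    linarith
  have hnonpos := nonpos_of_mem_spectrum hT₁_normal hz hbound
  have ha_sq : (a : ℝ) ^ 2 = 4 * M ^ 2 * |b| := by
    rw [ha, mul_pow, Real.sq_sqrt (abs_nonneg b)]
    ring
  rw [hδ, ha_sq] at hnonpos
  rw [pow_add] at hnonpos ⊢
  linarith

theorem hausdorffDist_spectrum_le_of_magneticKernel {T₁ T₂ : Lp ℂ 2 μ →L[ℂ] Lp ℂ 2 μ}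
    (hT₁_normal : IsStarNormal T₁) (hT₂_normal : IsStarNormal T₂)
    (hT₁ : HasIntegralKernel T₁ K) (hT₂ : HasIntegralKernel T₂ (magneticKernel b φ K))
    (hK : IsSchurKernel μ K C) (hKM : IsSchurKernel μ (offBand M K) ε)
    (hφ : Measurable (Function.uncurry φ))
    (htri : ∀ x y x', |φ x y + φ y x' - φ x x'| ≤ ‖x - y‖ * ‖y - x'‖) (hM : 0 ≤ M) :
    Metric.hausdorffDist (spectrum ℂ T₁) (spectrum ℂ T₂) ≤
      √(2 ^ (Module.finrank ℝ E + 6) * C * (M ^ 2 * |b| * C + ε)) := by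
  rcases eq_or_ne b 0 with rfl | hb
  · rw [magneticKernel_zero] at hT₂
    rw [hT₁.unique hT₂, Metric.hausdorffDist_self_zero]
    positivity
  have hT₁' : HasIntegralKernel T₁ (magneticKernel (-b) φ (magneticKernel b φ K)) := by
    rwa [magneticKernel_magneticKernel, neg_add_cancel, magneticKernel_zero]
  have hKM' : IsSchurKernel μ (offBand M (magneticKernel b φ K)) ε := by
    rw [offBand_magneticKernel]
    exact hKM.magneticKernel b hφ
  refine Metric.hausdorffDist_le_of_infDist (Real.sqrt_nonneg _)
    (fun z hz => Real.le_sqrt_of_sq_le ?_) (fun z hz => Real.le_sqrt_of_sq_le ?_)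
  · exact sq_infDist_spectrum_le_of_magneticKernel hT₁_normal hT₂_normal hT₁ hT₂ hK hKM hφ htri
      hb hM hz
  · simpa only [abs_neg] using sq_infDist_spectrum_le_of_magneticKernel hT₂_normal hT₁_normal
      hT₂ hT₁' (hK.magneticKernel b hφ) hKM' hφ htri (neg_ne_zero.2 hb) hM hz

end GaugeLocalization

section RowNorm
variable {X E : Type*} [MeasurableSpace X] [NormedAddCommGroup E] {μ : Measure X}
  {K K' : X → X → E}

/-- The one-sided Schur–Holmgren norm `ess sup_x ∫ ‖K x x'‖ dx'` of a kernel. -/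
def rowNorm (μ : Measure X) (K : X → X → E) : ℝ≥0∞ := essSup (fun x => ∫⁻ x', ‖K x x'‖ₑ ∂μ) μ

theorem ae_lintegral_enorm_le_of_rowNorm_le {C : ℝ≥0∞} (hK : rowNorm μ K ≤ C) :
    ∀ᵐ x ∂μ, ∫⁻ x', ‖K x x'‖ₑ ∂μ ≤ C :=
  (ae_le_essSup _).mono fun _ hx => hx.trans hK

theorem rowNorm_mono (h : ∀ᵐ x ∂μ, ∀ᵐ x' ∂μ, ‖K' x x'‖ₑ ≤ ‖K x x'‖ₑ) :
    rowNorm μ K' ≤ rowNorm μ K :=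
  essSup_mono_ae (h.mono fun _ hx => lintegral_mono_ae hx)

theorem ae_enorm_offBand_le [Norm X] [Sub X]
    (h : ∀ᵐ x ∂μ, ∀ᵐ x' ∂μ, ‖K' x x'‖ₑ ≤ ‖K x x'‖ₑ) (M : ℝ) :
    ∀ᵐ x ∂μ, ∀ᵐ x' ∂μ, ‖offBand M K' x x'‖ₑ ≤ ‖offBand M K x x'‖ₑ := by
  filter_upwards [h] with x hx
  filter_upwards [hx] with x' hx'
  unfold offBand
  split_ifs
  exacts [hx', le_rfl]

theorem rowNorm_offBand_le [Norm X] [Sub X] (M : ℝ) (K : X → X → E) :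
    rowNorm μ (offBand M K) ≤ rowNorm μ K :=
  rowNorm_mono <| ae_of_all _ fun x => ae_of_all _ fun x' => by
    unfold offBand
    split_ifs <;> simp

end RowNorm

section SelfAdjointKernel
variable {X 𝕜 : Type*} [MeasurableSpace X] {μ : Measure X} [SigmaFinite μ] [RCLike 𝕜]
  {T : Lp 𝕜 2 μ →L[𝕜] Lp 𝕜 2 μ} {K : X → X → 𝕜}

theorem HasIntegralKernel.ae_enorm_symm (hT : HasIntegralKernel T K) (hT_sa : IsSelfAdjoint T)
    (hK : Measurable (Function.uncurry K)) (hrow : rowNorm μ K ≠ ⊤) :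
    ∀ᵐ p ∂μ.prod μ, ‖K p.2 p.1‖ₑ = ‖K p.1 p.2‖ₑ := by
  have hint (s t : Set X) (hs : μ s ≠ ⊤) (_ : μ t ≠ ⊤) :
      IntegrableOn (Function.uncurry K) (s ×ˢ t) (μ.prod μ) :=
    integrableOn_prod_of_ae_lintegral_enorm_le hK.aestronglyMeasurable (C := (rowNorm μ K).toNNReal)
      (ae_lintegral_enorm_le_of_rowNorm_le (coe_toNNReal hrow).ge) hs t
  have hT_adj : HasIntegralKernel (ContinuousLinearMap.adjoint T) K := by rwa [hT_sa.adjoint_eq]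
  filter_upwards [hT.adjoint_kernel_ae_eq hT_adj hint hint] with p hp
  rw [hp, ← ofReal_norm, RCLike.norm_conj, ofReal_norm]

end SelfAdjointKernel

section MeasurableRepresentative
variable {X : Type*}

theorem measurableSections_magneticKernel [MeasurableSpace X] (μ : Measure X) (b : ℝ)
    {φ : X → X → ℝ} (hφ : Measurable (Function.uncurry φ)) (K : X → X → ℂ) :
    measurableSections μ (magneticKernel b φ K) = magneticKernel b φ (measurableSections μ K) := by
  have hphase (x : X) : AEStronglyMeasurable (magneticPhase b φ x) μ :=
    (measurable_magneticPhase b hφ).of_uncurry_left.aestronglyMeasurable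
  have hiff (x : X) : AEStronglyMeasurable (magneticKernel b φ K x) μ ↔
      AEStronglyMeasurable (K x) μ := by
    refine ⟨fun h => aestronglyMeasurable_of_mul_right (hphase x) (ae_of_all _ fun x' => ?_) ?_,
      fun h => (hphase x).mul h⟩
    · exact Complex.exp_ne_zero _
    · exact h.congr (ae_of_all _ fun x' => mul_comm _ _)
  ext x x'
  by_cases hx : AEStronglyMeasurable (K x) μ
  · simp only [measurableSections, magneticKernel, if_pos hx, if_pos ((hiff x).2 hx)]
  · simp [measurableSections, magneticKernel, if_neg hx, if_neg (mt (hiff x).1 hx)]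

theorem HasIntegralKernel.exists_measurable_ae_eq_measurableSections [PseudoMetricSpace X]
    [ProperSpace X] [Nonempty X] [MeasurableSpace X] [BorelSpace X] {μ : Measure X}
    [IsUnifLocDoublingMeasure μ] [IsLocallyFiniteMeasure μ] {𝕜 : Type*} [RCLike 𝕜]
    {T : Lp 𝕜 2 μ →L[𝕜] Lp 𝕜 2 μ} {K : X → X → 𝕜} (hT : HasIntegralKernel T K)
    (hK : rowNorm μ K ≠ ⊤) : ∃ K' : X → X → 𝕜, Measurable (Function.uncurry K') ∧
      ∀ᵐ x ∂μ, K' x =ᵐ[μ] measurableSections μ K x := by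
  refine hT.measurableSections.exists_measurable ?_
  filter_upwards [ae_lintegral_enorm_le_of_rowNorm_le (le_refl (rowNorm μ K))] with x hx
  refine Integrable.locallyIntegrable ⟨aestronglyMeasurable_measurableSections μ K x, ?_⟩
  rw [hasFiniteIntegral_iff_enorm]
  exact (lintegral_mono (enorm_measurableSections_le μ K x)).trans_lt (hx.trans_lt hK.lt_top)

end MeasurableRepresentative

section MagneticFamily
variable {E : Type*} [NormedAddCommGroup E] [NormedSpace ℝ E] [FiniteDimensional ℝ E]
  [MeasurableSpace E] [BorelSpace E] {μ : Measure E} [μ.IsAddHaarMeasure] {φ : E → E → ℝ}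
  {K : E → E → ℂ} {Hb : ℝ → (Lp ℂ 2 μ →L[ℂ] Lp ℂ 2 μ)}

theorem exists_isSchurKernel_hasIntegralKernel_magneticKernel (hK : rowNorm μ K ≠ ⊤)
    (hφ : Measurable (Function.uncurry φ)) (hsa : ∀ b, IsSelfAdjoint (Hb b))
    (hker : ∀ b, HasIntegralKernel (Hb b) (magneticKernel b φ K)) :
    ∃ K' : E → E → ℂ, (∀ b, HasIntegralKernel (Hb b) (magneticKernel b φ K')) ∧
      IsSchurKernel μ K' (rowNorm μ K).toNNReal ∧
      ∀ M, IsSchurKernel μ (offBand M K') (rowNorm μ (offBand M K)).toNNReal := by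
  have hker_zero : HasIntegralKernel (Hb 0) K := by simpa only [magneticKernel_zero] using hker 0
  obtain ⟨K', hK'_meas, hK'⟩ := hker_zero.exists_measurable_ae_eq_measurableSections hK
  have hrep (b : ℝ) : HasIntegralKernel (Hb b) (magneticKernel b φ K') := by
    refine HasIntegralKernel.congr_ae (K := magneticKernel b φ (measurableSections μ K)) ?_ <|
      hK'.mono fun x hx => hx.mono fun x' hx' => by rw [magneticKernel, hx', magneticKernel]
    rw [← measurableSections_magneticKernel μ b hφ]
    exact (hker b).measurableSections
  have hle : ∀ᵐ x ∂μ, ∀ᵐ x' ∂μ, ‖K' x x'‖ₑ ≤ ‖K x x'‖ₑ :=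
    hK'.mono fun x hx => hx.mono fun x' hx' => hx' ▸ enorm_measurableSections_le μ K x x'
  have hrow : rowNorm μ K' ≤ rowNorm μ K := rowNorm_mono hle
  have hrep_zero : HasIntegralKernel (Hb 0) K' := by simpa only [magneticKernel_zero] using hrep 0
  have hsymm : ∀ᵐ p ∂μ.prod μ, ‖K' p.2 p.1‖ₑ = ‖K' p.1 p.2‖ₑ :=
    hrep_zero.ae_enorm_symm (hsa 0) hK'_meas (ne_top_of_le_ne_top hK hrow)
  have hband (M : ℝ) : rowNorm μ (offBand M K) ≠ ⊤ :=
    ne_top_of_le_ne_top hK (rowNorm_offBand_le M K)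
  refine ⟨K', hrep, .of_ae_symm hK'_meas hsymm ?_, fun M => .of_ae_symm ?_ ?_ ?_⟩
  · exact ae_lintegral_enorm_le_of_rowNorm_le (hrow.trans_eq (coe_toNNReal hK).symm)
  · exact Measurable.ite (measurableSet_lt measurable_const
      (measurable_fst.sub measurable_snd).norm) hK'_meas measurable_const
  · filter_upwards [hsymm] with p hp
    simp only [offBand, norm_sub_rev p.2 p.1]
    split_ifs
    exacts [hp, rfl]
  · exact ae_lintegral_enorm_le_of_rowNorm_le
      ((rowNorm_mono (ae_enorm_offBand_le hle M)).trans_eq (coe_toNNReal (hband M)).symm)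

theorem hausdorffDist_spectra_le (hK : rowNorm μ K ≠ ⊤) (hφ : Measurable (Function.uncurry φ))
    (htri : ∀ x y x', |φ x y + φ y x' - φ x x'| ≤ ‖x - y‖ * ‖y - x'‖)
    (hsa : ∀ b, IsSelfAdjoint (Hb b))
    (hker : ∀ b, HasIntegralKernel (Hb b) (magneticKernel b φ K)) {M : ℝ} (hM : 0 ≤ M)
    (b c : ℝ) :
    Metric.hausdorffDist (spectrum ℂ (Hb b)) (spectrum ℂ (Hb c)) ≤
      √(2 ^ (Module.finrank ℝ E + 6) * (rowNorm μ K).toReal *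
        (M ^ 2 * |c - b| * (rowNorm μ K).toReal + (rowNorm μ (offBand M K)).toReal)) := by
  obtain ⟨K', hrep, hK', hband⟩ :=
    exists_isSchurKernel_hasIntegralKernel_magneticKernel hK hφ hsa hker
  refine hausdorffDist_spectrum_le_of_magneticKernel (hsa b).isStarNormal (hsa c).isStarNormal
    (hrep b) ?_ (hK'.magneticKernel b hφ) ?_ hφ htri hM
  · rw [magneticKernel_magneticKernel, sub_add_cancel]
    exact hrep c
  · rw [offBand_magneticKernel]
    exact (hband M).magneticKernel b hφ

theorem hausdorffDist_spectra_continuous_general (hK : rowNorm μ K ≠ ⊤)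
    (hunif : Tendsto (fun M => rowNorm μ (offBand M K)) atTop (nhds 0))
    (hφ : Measurable (Function.uncurry φ))
    (htri : ∀ x y x', |φ x y + φ y x' - φ x x'| ≤ ‖x - y‖ * ‖y - x'‖)
    (hsa : ∀ b, IsSelfAdjoint (Hb b))
    (hker : ∀ b, HasIntegralKernel (Hb b) (magneticKernel b φ K)) (b₀ : ℝ) :
    ContinuousAt (fun b => Metric.hausdorffDist (spectrum ℂ (Hb b)) (spectrum ℂ (Hb b₀))) b₀ := by
  set C := (rowNorm μ K).toReal
  set D : ℝ := 2 ^ (Module.finrank ℝ E + 6)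
  set bound : ℝ → ℝ → ℝ := fun M b =>
    √(D * C * (M ^ 2 * |b₀ - b| * C + (rowNorm μ (offBand M K)).toReal)) with hbound
  have hlim_M : Tendsto (fun M => bound M b₀) atTop (nhds 0) := by
    have htail := ((ENNReal.tendsto_toReal zero_ne_top).comp hunif).const_mul (D * C) |>.sqrt
    simpa [hbound] using htail
  have hlim_b (M : ℝ) : Tendsto (bound M) (nhds b₀) (nhds (bound M b₀)) := by
    have hcont : Continuous (bound M) := by fun_prop
    exact hcont.tendsto b₀
  rw [ContinuousAt, Metric.hausdorffDist_self_zero]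
  refine tendsto_order.2 ⟨fun a ha => Eventually.of_forall fun b =>
    ha.trans_le Metric.hausdorffDist_nonneg, fun δ hδ => ?_⟩
  obtain ⟨M, hMδ, hM⟩ := ((hlim_M.eventually_lt_const hδ).and (eventually_ge_atTop 0)).exists
  filter_upwards [(hlim_b M).eventually_lt_const hMδ] with b hb
  exact (hausdorffDist_spectra_le hK hφ htri hsa hker hM b b₀).trans_lt hb

end MagneticFamily

theorem rowNorm_volume_le_SHnorm {d : ℕ} (K : Ed d → Ed d → ℂ) :
    rowNorm volume K ≤ SHnorm 0 K := by
  refine essSup_le_of_ae_le _ (ae_of_all _ fun x => ?_)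
  refine le_max_of_le_right (le_iSup_of_le x (le_of_eq ?_))
  simp only [Real.rpow_zero, mul_one, ofReal_norm]

/-- Theorem 1 of the paper (case `α = 0`, at `b₀ = 0`): for `H ∈ C_unif`, i.e. a
bounded self-adjoint operator with kernel of finite Schur–Holmgren norm whose band
truncations converge to it in Schur–Holmgren norm, and a Harper-like family `H_b`
with kernel `e^{ibφ(x,x')}K(x,x')`, the map `b ↦ d_H(σ(H_b), σ(H))` is continuous
at `b = 0`. -/
theorem hausdorffDist_spectra_continuous (d : ℕ)
    (H : L2 d →L[ℂ] L2 d) (hHsa : IsSelfAdjoint H)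
    (K : Ed d → Ed d → ℂ)
    (hker : ∀ ψ : L2 d, ∀ᵐ x : Ed d, (H ψ : Ed d → ℂ) x = ∫ x', K x x' * ψ x')
    (hK : SHnorm 0 K ≠ ⊤)
    (hunif : Tendsto (fun M : ℝ =>
        SHnorm 0 (fun x x' => if M < ‖x - x'‖ then K x x' else 0)) atTop (nhds 0))
    (φ : Ed d → Ed d → ℝ) (hφc : Continuous fun p : Ed d × Ed d => φ p.1 p.2)
    (hanti : ∀ x x' : Ed d, φ x x' = - φ x' x)
    (htri : ∀ x y x' : Ed d, |φ x y + φ y x' - φ x x'| ≤ ‖x - y‖ * ‖y - x'‖)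
    (Hb : ℝ → (L2 d →L[ℂ] L2 d)) (hHbsa : ∀ b, IsSelfAdjoint (Hb b))
    (hHbker : ∀ b : ℝ, ∀ ψ : L2 d, ∀ᵐ x : Ed d, (Hb b ψ : Ed d → ℂ) x =
      ∫ x', Complex.exp (Complex.I * b * φ x x') * K x x' * ψ x') :
    ContinuousAt (fun b : ℝ =>
      Metric.hausdorffDist (spectrum ℂ (Hb b)) (spectrum ℂ H)) 0 := by
  have hHb (b : ℝ) : HasIntegralKernel (Hb b) (magneticKernel b φ K) := hHbker b
  have hH : H = Hb 0 := HasIntegralKernel.unique hker (magneticKernel_zero φ K ▸ hHb 0)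
  rw [hH]
  exact hausdorffDist_spectra_continuous_general
    (ne_top_of_le_ne_top hK (rowNorm_volume_le_SHnorm K))
    (tendsto_of_tendsto_of_tendsto_of_le_of_le tendsto_const_nhds hunif (fun _ => zero_le)
      fun _ => rowNorm_volume_le_SHnorm _)
    hφc.measurable htri hHbsa hHb 0
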